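/- Let S be a recurrent strongly aperiodic random walk on ℤ with 1−φ(θ) ~ c₀e^{±iπγ/2}|θ|^α (θ→±0), 1<α<2, |γ| ≤ 2−α. Let f⁰(n) = P[σ^0_{{0}} = n] be the probability that the walk returns to 0 for the first time at step n. Then f⁰(n) ~ κ_{α,γ}·c₀^{1/α}·n^{−2+1/α} as n → ∞, where κ_{α,γ} = (α−1)·sin(π/α)/(Γ(1/α)·sin(π(α−γ)/(2α))). -/

import Mathlib

open Filter Topology Asymptotics

/-- `pn p n x` is the `n`-step transition probability `P[S_n = x]`. -/
noncomputable def pn (p : ℤ → ℝ) : ℕ → ℤ → ℝ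
  | 0, x => if x = 0 then 1 else 0
  | n + 1, x => ∑' y : ℤ, pn p n y * p (x - y)

/-- The characteristic function `φ(θ) = Σ_x p(x) e^{iθx}`. -/
noncomputable def rwChar (p : ℤ → ℝ) (θ : ℝ) : ℂ :=
  ∑' x : ℤ, (p x : ℂ) * Complex.exp (Complex.I * θ * x)

/-- `pk p B n x y = P[x + S_n = y, σ^x_B > n]`: the walk killed on `B`. -/
noncomputable def pk (p : ℤ → ℝ) (B : Set ℤ) : ℕ → ℤ → ℤ → ℝ
  | 0, x, y => if x = y then 1 else 0
  | n + 1, x, y => Set.indicator Bᶜ (fun w => ∑' z : ℤ, pk p B n x z * p (w - z)) y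

/-- `f⁰(n) = P[σ^0_{{0}} = n]`: the probability that the walk started at `0`
returns to `0` for the first time at step `n`. -/
noncomputable def firstReturn (p : ℤ → ℝ) : ℕ → ℝ
  | 0 => 0
  | n + 1 => ∑' z : ℤ, pk p {0} n 0 z * p (0 - z)




/-- convolution of two absolutely summable sequences on `ℤ` -/
lemma conv_hasSum {𝕜 : Type*} [RCLike 𝕜] {f g : ℤ → 𝕜} (hf : Summable (fun x => ‖f x‖))
    (hg : Summable (fun x => ‖g x‖)) :
    HasSum (fun x => ∑' y, f y * g (x - y)) ((∑' x, f x) * (∑' x, g x)) ∧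
    Summable (fun x => ‖∑' y, f y * g (x - y)‖) ∧
    (∀ x, Summable (fun y => f y * g (x - y))) := by
  have hfg : Summable (fun q : ℤ × ℤ => f q.1 * g q.2) := summable_mul_of_summable_norm hf hg
  have hfgn : Summable (fun q : ℤ × ℤ => ‖f q.1 * g q.2‖) := by
    simpa [norm_mul] using hf.mul_of_nonneg hg (fun _ => norm_nonneg _) (fun _ => norm_nonneg _)
  obtain ⟨e, he⟩ : ∃ e : ℤ × ℤ ≃ ℤ × ℤ, ∀ q, e q = (q.2, q.1 - q.2) :=
    ⟨{ toFun := fun q => (q.2, q.1 - q.2)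
       invFun := fun q => (q.1 + q.2, q.1)
       left_inv := fun q => by ext <;> simp
       right_inv := fun q => by ext <;> simp }, fun q => rfl⟩
  have h1 : HasSum (fun q : ℤ × ℤ => f q.1 * g q.2) ((∑' x, f x) * (∑' x, g x)) := by
    rw [tsum_mul_tsum_of_summable_norm hf hg]; exact hfg.hasSum
  have h2 : HasSum (fun q : ℤ × ℤ => f q.2 * g (q.1 - q.2)) ((∑' x, f x) * (∑' x, g x)) := by
    have := (e.hasSum_iff).2 h1
    simpa only [Function.comp_def, he] using this
  have h3 : Summable (fun q : ℤ × ℤ => ‖f q.2 * g (q.1 - q.2)‖) := by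
    have := (e.summable_iff).2 hfgn
    simpa only [Function.comp_def, he] using this
  have h4 : ∀ x, Summable (fun y => f y * g (x - y)) := fun x => h2.summable.prod_factor x
  refine ⟨h2.prod_fiberwise (fun x => (h4 x).hasSum), ?_, h4⟩
  refine Summable.of_nonneg_of_le (fun _ => norm_nonneg _) (fun x => ?_) h3.prod
  exact norm_tsum_le_tsum_norm (h3.prod_factor x)

lemma pn_basic {p : ℤ → ℝ} (hp0 : ∀ x, 0 ≤ p x) (hp1 : HasSum p 1) (n : ℕ) :
    (∀ x, 0 ≤ pn p n x) ∧ HasSum (pn p n) 1 := by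
  induction n with
  | zero =>
    refine ⟨fun x => by simp only [pn]; split_ifs <;> norm_num, ?_⟩
    simpa [pn] using hasSum_ite_eq (0 : ℤ) (1 : ℝ)
  | succ n ih =>
    refine ⟨fun x => tsum_nonneg fun y => mul_nonneg (ih.1 y) (hp0 _), ?_⟩
    have := (conv_hasSum (f := pn p n) (g := p) ih.2.summable.norm hp1.summable.norm).1
    rw [ih.2.tsum_eq, hp1.tsum_eq, mul_one] at this
    exact this

lemma exp_norm_one (θ : ℝ) (x : ℤ) : ‖Complex.exp (Complex.I * θ * x)‖ = 1 := by
  rw [show Complex.I * θ * x = ((θ * x : ℝ) : ℂ) * Complex.I by push_cast; ring]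
  exact Complex.norm_exp_ofReal_mul_I _

lemma char_term_norm {q : ℤ → ℝ} (hq : ∀ x, 0 ≤ q x) (θ : ℝ) (x : ℤ) :
    ‖(q x : ℂ) * Complex.exp (Complex.I * θ * x)‖ = q x := by
  rw [norm_mul, exp_norm_one, mul_one, Complex.norm_real, Real.norm_of_nonneg (hq x)]

lemma pn_char {p : ℤ → ℝ} (hp0 : ∀ x, 0 ≤ p x) (hp1 : HasSum p 1) (θ : ℝ) (n : ℕ) :
    ∑' x : ℤ, (pn p n x : ℂ) * Complex.exp (Complex.I * θ * x) = rwChar p θ ^ n := by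
  induction n with
  | zero =>
    rw [tsum_eq_single 0]
    · simp [pn]
    · intro b hb; simp [pn, hb]
  | succ n ih =>
    have hb := pn_basic hp0 hp1 n
    have := (conv_hasSum (f := fun x : ℤ => (pn p n x : ℂ) * Complex.exp (Complex.I * θ * x))
      (g := fun x : ℤ => (p x : ℂ) * Complex.exp (Complex.I * θ * x))
      (by simp only [char_term_norm hb.1]; exact hb.2.summable)
      (by simp only [char_term_norm hp0]; exact hp1.summable)).1.tsum_eq
    rw [pow_succ, ← ih]
    refine Eq.trans (tsum_congr fun x => ?_) this
    simp only [pn]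
    rw [Complex.ofReal_tsum, ← tsum_mul_right]
    refine tsum_congr fun y => ?_
    rw [show Complex.I * θ * x = Complex.I * θ * y + Complex.I * θ * ((x - y : ℤ) : ℂ) by
      push_cast; ring, Complex.exp_add]
    push_cast; ring

lemma rwChar_norm_le {p : ℤ → ℝ} (hp0 : ∀ x, 0 ≤ p x) (hp1 : HasSum p 1) (θ : ℝ) :
    ‖rwChar p θ‖ ≤ 1 := by
  refine tsum_of_norm_bounded hp1 (fun x => ?_)
  exact (char_term_norm hp0 θ x).le

lemma rwChar_continuous {p : ℤ → ℝ} (hp0 : ∀ x, 0 ≤ p x) (hp1 : HasSum p 1) :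
    Continuous (rwChar p) := by
  refine continuous_tsum (fun x => by fun_prop) hp1.summable (fun x θ => ?_)
  exact (char_term_norm hp0 θ x).le

lemma rwChar_norm_lt {p : ℤ → ℝ} (hp0 : ∀ x, 0 ≤ p x) (hp1 : HasSum p 1)
    (hap : ∀ x : ℤ, ∀ᶠ n in atTop, 0 < pn p n x) {θ : ℝ} (h0 : θ ≠ 0) (hθ : |θ| ≤ Real.pi) :
    ‖rwChar p θ‖ < 1 := by
  refine lt_of_le_of_ne (rwChar_norm_le hp0 hp1 θ) fun heq => ?_
  obtain ⟨n, hn0, hn1⟩ := ((hap 0).and (hap 1)).exists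
  have hb := pn_basic hp0 hp1 n
  have hs : Summable (fun x : ℤ => (pn p n x : ℂ) * Complex.exp (Complex.I * θ * x)) :=
    Summable.of_norm (by simp only [char_term_norm hb.1]; exact hb.2.summable)
  have h1 : ‖∑' x : ℤ, (pn p n x : ℂ) * Complex.exp (Complex.I * θ * x)‖ = 1 := by
    rw [pn_char hp0 hp1, norm_pow, heq, one_pow]
  have h2 := hs.sum_add_tsum_compl (s := {0, 1})
  have h3 := hb.2.summable.sum_add_tsum_compl (s := {0, 1})
  rw [hb.2.tsum_eq] at h3
  rw [← h2] at h1
  have h4 : ‖∑' x : ↑((({0, 1} : Finset ℤ) : Set ℤ)ᶜ), (pn p n x : ℂ) * Complex.exp (Complex.I * θ * (x : ℤ))‖ ≤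
     ∑' x : ↑((({0, 1} : Finset ℤ) : Set ℤ)ᶜ), pn p n x := by
    refine tsum_of_norm_bounded ((hb.2.summable.subtype _).hasSum) (fun x => ?_)
    exact (char_term_norm hb.1 θ x).le
  have h5 := norm_add_le (∑ x ∈ ({0, 1} : Finset ℤ), (pn p n x : ℂ) * Complex.exp (Complex.I * θ * x))
    (∑' x : ↑((({0, 1} : Finset ℤ) : Set ℤ)ᶜ), (pn p n x : ℂ) * Complex.exp (Complex.I * θ * (x : ℤ)))
  rw [h1] at h5
  simp only [Finset.sum_pair (zero_ne_one (α := ℤ))] at h5 h3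
  set a := pn p n 0
  set b := pn p n 1
  have h6 : a + b ≤ ‖(a : ℂ) + (b : ℂ) * Complex.exp (Complex.I * θ)‖ := by
    simp only [Int.cast_zero, mul_zero, Complex.exp_zero, mul_one, Int.cast_one] at h5
    linarith
  have h7 : ‖(a : ℂ) + (b : ℂ) * Complex.exp (Complex.I * θ)‖ ^ 2
      = a ^ 2 + b ^ 2 + 2 * a * b * Real.cos θ := by
    rw [mul_comm Complex.I, Complex.exp_mul_I, ← Complex.ofReal_cos, ← Complex.ofReal_sin,
      ← Complex.normSq_eq_norm_sq, Complex.normSq_apply]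
    simp [-Complex.ofReal_cos, -Complex.ofReal_sin]
    nlinarith [Real.sin_sq_add_cos_sq θ]
  have h8 : (a + b) ^ 2 ≤ a ^ 2 + b ^ 2 + 2 * a * b * Real.cos θ := by
    rw [← h7]; gcongr
  have h9 : 1 ≤ Real.cos θ := by
    have : 0 < 2 * a * b := by positivity
    nlinarith
  have h10 : Real.cos θ = 1 := le_antisymm (Real.cos_le_one θ) h9
  rw [Real.cos_eq_one_iff_of_lt_of_lt] at h10
  · exact h0 h10
  · have := abs_le.1 hθ; linarith [Real.pi_pos]
  · have := abs_le.1 hθ; linarith [Real.pi_pos]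

lemma pn_inversion {p : ℤ → ℝ} (hp0 : ∀ x, 0 ≤ p x) (hp1 : HasSum p 1) (n : ℕ) :
    ∫ θ in (-Real.pi)..Real.pi, rwChar p θ ^ n = 2 * Real.pi * (pn p n 0 : ℂ) := by
  have hb := pn_basic hp0 hp1 n
  have h1 : HasSum (fun x : ℤ => ∫ θ in (-Real.pi)..Real.pi,
      (pn p n x : ℂ) * Complex.exp (Complex.I * θ * x))
      (∫ θ in (-Real.pi)..Real.pi, rwChar p θ ^ n) := by
    refine intervalIntegral.hasSum_integral_of_dominated_convergence (fun x _ => pn p n x)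
      (fun x => by fun_prop) (fun x => ?_) ?_ ?_ ?_
    · exact Eventually.of_forall fun θ _ => (char_term_norm hb.1 θ x).le
    · exact Eventually.of_forall fun θ _ => hb.2.summable
    · simp
    · refine Eventually.of_forall fun θ _ => ?_
      rw [← pn_char hp0 hp1]
      exact (Summable.of_norm (by simp only [char_term_norm hb.1]; exact hb.2.summable)).hasSum
  rw [← h1.tsum_eq, tsum_eq_single 0]
  · simp only [Int.cast_zero, mul_zero, Complex.exp_zero, mul_one,
      intervalIntegral.integral_const, sub_neg_eq_add]
    rw [Complex.real_smul]; push_cast; ring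
  · intro x hx
    rw [intervalIntegral.integral_const_mul]
    have hx' : Complex.I * x ≠ 0 := by simp [hx]
    have : ∫ θ in (-Real.pi)..Real.pi, Complex.exp (Complex.I * θ * x) = 0 := by
      have := integral_exp_mul_complex (a := -Real.pi) (b := Real.pi) hx'
      rw [show (fun θ : ℝ => Complex.exp (Complex.I * θ * x)) =
        fun θ : ℝ => Complex.exp (Complex.I * x * θ) by funext θ; ring_nf, this]
      rw [div_eq_zero_iff]; left
      rw [sub_eq_zero, Complex.exp_eq_exp_iff_exists_int]
      exact ⟨x, by push_cast; ring⟩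
    rw [this, mul_zero]

/-- distribution of the killed walk -/
lemma pk_basic {p : ℤ → ℝ} (hp0 : ∀ x, 0 ≤ p x) (hp1 : HasSum p 1) (n : ℕ) :
    (∀ x, 0 ≤ pk p {0} n 0 x) ∧ Summable (pk p {0} n 0) := by
  induction n with
  | zero =>
    refine ⟨fun x => by simp only [pk]; split_ifs <;> norm_num, ?_⟩
    have := (hasSum_ite_eq (0 : ℤ) (1 : ℝ)).summable
    simpa [pk, eq_comm] using this
  | succ n ih =>
    have h := (conv_hasSum (f := pk p {0} n 0) (g := p) ih.2.norm hp1.summable.norm).1.summable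
    refine ⟨fun x => ?_, ?_⟩
    · simp only [pk]
      exact Set.indicator_nonneg (fun w _ => tsum_nonneg fun y => mul_nonneg (ih.1 y) (hp0 _)) _
    · simp only [pk]
      exact h.indicator _

lemma firstReturn_nonneg {p : ℤ → ℝ} (hp0 : ∀ x, 0 ≤ p x) (hp1 : HasSum p 1) (n : ℕ) :
    0 ≤ firstReturn p n := by
  cases n with
  | zero => simp [firstReturn]
  | succ n => exact tsum_nonneg fun y => mul_nonneg ((pk_basic hp0 hp1 n).1 y) (hp0 _)

lemma pn_decomp {p : ℤ → ℝ} (hp0 : ∀ x, 0 ≤ p x) (hp1 : HasSum p 1) (n : ℕ) (x : ℤ) :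
    pn p n x = pk p {0} n 0 x +
      ∑ k ∈ Finset.range n, firstReturn p (k + 1) * pn p (n - (k + 1)) x := by
  induction n generalizing x with
  | zero => simp [pn, pk, eq_comm]
  | succ n ih =>
    have hq : ∀ m x, Summable (fun y => pn p m y * p (x - y)) := fun m x =>
      (conv_hasSum (f := pn p m) (g := p) (pn_basic hp0 hp1 m).2.summable.norm
        hp1.summable.norm).2.2 x
    have hk : ∀ x, Summable (fun y => pk p {0} n 0 y * p (x - y)) := fun x =>
      (conv_hasSum (f := pk p {0} n 0) (g := p) (pk_basic hp0 hp1 n).2.norm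
        hp1.summable.norm).2.2 x
    have e1 : pn p (n + 1) x = ∑' y, pk p {0} n 0 y * p (x - y) +
        ∑ k ∈ Finset.range n, firstReturn p (k + 1) * pn p (n + 1 - (k + 1)) x := by
      have hstep : pn p (n + 1) x = ∑' y, pn p n y * p (x - y) := rfl
      rw [hstep]
      have e2 : ∀ y, pn p n y * p (x - y) = pk p {0} n 0 y * p (x - y) +
          ∑ k ∈ Finset.range n, firstReturn p (k + 1) * (pn p (n - (k + 1)) y * p (x - y)) := by
        intro y
        rw [ih y, add_mul, Finset.sum_mul]
        simp only [mul_assoc]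
      rw [tsum_congr e2, Summable.tsum_add (hk x)
        (summable_sum fun k _ => (hq _ x).mul_left _), Summable.tsum_finsetSum
        (fun k _ => (hq _ x).mul_left _)]
      congr 1
      refine Finset.sum_congr rfl fun k hk => ?_
      rw [tsum_mul_left]
      congr 1
      have : n + 1 - (k + 1) = (n - (k + 1)) + 1 := by
        have := Finset.mem_range.1 hk; omega
      rw [this]; rfl
    rw [e1, Finset.sum_range_succ, add_comm (Finset.sum _ _), ← add_assoc]
    congr 1
    simp only [pk, firstReturn, Nat.sub_self, pn]
    by_cases hx : x = 0
    · subst hx; simp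
    · simp [hx]

lemma renewal {p : ℤ → ℝ} (hp0 : ∀ x, 0 ≤ p x) (hp1 : HasSum p 1) (n : ℕ) :
    pn p n 0 = (if n = 0 then 1 else 0) +
      ∑ kl ∈ Finset.HasAntidiagonal.antidiagonal n, firstReturn p kl.1 * pn p kl.2 0 := by
  rw [Finset.Nat.sum_antidiagonal_eq_sum_range_succ (fun i j => firstReturn p i * pn p j 0),
    Finset.sum_range_succ', pn_decomp hp0 hp1 n 0]
  cases n with
  | zero => simp [pk, firstReturn]
  | succ n => simp [pk, firstReturn]

lemma pn_le_one {p : ℤ → ℝ} (hp0 : ∀ x, 0 ≤ p x) (hp1 : HasSum p 1) (n : ℕ) (x : ℤ) :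
    pn p n x ≤ 1 := by
  have hb := pn_basic hp0 hp1 n
  exact le_hasSum hb.2 x (fun y _ => hb.1 y)

lemma firstReturn_le_one {p : ℤ → ℝ} (hp0 : ∀ x, 0 ≤ p x) (hp1 : HasSum p 1) (n : ℕ) :
    firstReturn p n ≤ 1 := by
  refine le_trans ?_ (pn_le_one hp0 hp1 n 0)
  rw [renewal hp0 hp1 n]
  have h := Finset.single_le_sum (f := fun kl : ℕ × ℕ => firstReturn p kl.1 * pn p kl.2 0)
    (s := Finset.HasAntidiagonal.antidiagonal n)
    (fun i _ => mul_nonneg (firstReturn_nonneg hp0 hp1 _) ((pn_basic hp0 hp1 _).1 _))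
    (a := (n, 0)) (by simp)
  have h2 : (0 : ℝ) ≤ if n = 0 then 1 else 0 := by split_ifs <;> norm_num
  simp [pn] at h
  linarith


open MeasureTheory

lemma int_add_abs {s : ℝ} (hs : 1 < s) : ∃ K : ℝ, 0 ≤ K ∧ ∀ a : ℝ, 0 < a →
    Integrable (fun x : ℝ => (a + |x|) ^ (-s)) ∧ ∫ x : ℝ, (a + |x|) ^ (-s) = K * a ^ (1 - s) := by
  refine ⟨∫ x : ℝ, (1 + ‖x‖) ^ (-s), integral_nonneg fun x => by positivity, fun a ha => ?_⟩
  have h1 : Integrable (fun x : ℝ => (1 + ‖x‖) ^ (-s)) :=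
    integrable_one_add_norm (by simpa using hs)
  have h2 : (fun x : ℝ => (a + |x|) ^ (-s)) = fun x : ℝ => a ^ (-s) * (1 + ‖x / a‖) ^ (-s) := by
    funext x
    rw [← Real.mul_rpow ha.le (by positivity), Real.norm_eq_abs, abs_div, abs_of_pos ha]
    congr 1
    field_simp
  rw [h2]
  refine ⟨(h1.comp_div ha.ne').const_mul _, ?_⟩
  rw [integral_const_mul, Measure.integral_comp_div (fun x : ℝ => (1 + ‖x‖) ^ (-s)) a,
    abs_of_pos ha, smul_eq_mul, sub_eq_add_neg, Real.rpow_add ha, Real.rpow_one]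
  ring

lemma add_rpow_bound {α ρ x : ℝ} (hα : 0 < α) (hρ : 0 < ρ) (hx : 0 ≤ x) :
    (ρ ^ (1 / α) + x) ^ α ≤ 2 ^ α * (ρ + x ^ α) := by
  have h0 : (ρ ^ (1 / α)) ^ α = ρ := by
    rw [← Real.rpow_mul hρ.le]; field_simp; simp
  have hx' : 0 ≤ x ^ α := by positivity
  have ha : 0 < ρ ^ (1 / α) := by positivity
  rcases le_total (ρ ^ (1 / α)) x with h | h
  · calc (ρ ^ (1 / α) + x) ^ α ≤ (2 * x) ^ α := by gcongr; linarith
      _ = 2 ^ α * x ^ α := by rw [Real.mul_rpow (by norm_num) hx]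
      _ ≤ _ := by gcongr; linarith
  · calc (ρ ^ (1 / α) + x) ^ α ≤ (2 * ρ ^ (1 / α)) ^ α := by gcongr; linarith
      _ = 2 ^ α * ρ := by rw [Real.mul_rpow (by norm_num) ha.le, h0]
      _ ≤ _ := by gcongr; linarith

lemma int_R {α : ℝ} (hα : 1 < α) (k : ℕ) : ∃ K : ℝ, 0 ≤ K ∧ ∀ ρ : ℝ, 0 < ρ →
    Integrable (fun θ : ℝ => ((ρ + |θ| ^ α)⁻¹) ^ (k + 1)) ∧
    ∫ θ : ℝ, ((ρ + |θ| ^ α)⁻¹) ^ (k + 1) ≤ K * ρ ^ (1 / α - (k + 1)) := by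
  have hα0 : 0 < α := by linarith
  have hs : 1 < α * (k + 1) := by
    have : (0:ℝ) ≤ k := Nat.cast_nonneg k
    nlinarith
  obtain ⟨K, hK, h⟩ := int_add_abs hs
  refine ⟨(2 ^ α) ^ (k + 1) * K, by positivity, fun ρ hρ => ?_⟩
  obtain ⟨h1, h2⟩ := h (ρ ^ (1 / α)) (by positivity)
  have hb : ∀ θ : ℝ, ((ρ + |θ| ^ α)⁻¹) ^ (k + 1) ≤
      (2 ^ α) ^ (k + 1) * (ρ ^ (1 / α) + |θ|) ^ (-(α * (k + 1))) := by
    intro θ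
    have e : (ρ ^ (1 / α) + |θ|) ^ (-(α * (k + 1))) = (((ρ ^ (1 / α) + |θ|) ^ α)⁻¹) ^ (k + 1) := by
      rw [Real.rpow_neg (by positivity), Real.rpow_mul (by positivity), inv_pow]
      norm_cast
    rw [e, ← mul_pow]
    have := add_rpow_bound hα0 hρ (abs_nonneg θ)
    have h3 : 0 < (ρ ^ (1 / α) + |θ|) ^ α := by positivity
    have h4 : 0 < ρ + |θ| ^ α := by positivity
    gcongr
    rw [inv_le_comm₀ h4 (by positivity), mul_inv, inv_inv, inv_mul_le_iff₀ (by positivity)]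
    exact this
  have hi := h1.const_mul ((2 ^ α) ^ (k + 1))
  have hcont : Continuous fun θ : ℝ => ((ρ + |θ| ^ α)⁻¹) ^ (k + 1) := by
    refine Continuous.pow (Continuous.inv₀ ?_ ?_) _
    · exact continuous_const.add (continuous_abs.rpow_const fun _ => Or.inr hα0.le)
    · intro θ; positivity
  have hintg : Integrable (fun θ : ℝ => ((ρ + |θ| ^ α)⁻¹) ^ (k + 1)) := by
    refine hi.mono' hcont.aestronglyMeasurable (Eventually.of_forall fun θ => ?_)
    rw [Real.norm_of_nonneg (by positivity)]
    exact hb θ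
  refine ⟨hintg, (integral_mono hintg hi hb).trans ?_⟩
  rw [integral_const_mul, h2, ← Real.rpow_mul hρ.le, mul_assoc]
  apply le_of_eq
  congr 3
  field_simp

/-- the model integral -/
noncomputable def mI (α : ℝ) (k : ℕ) (v : ℂ) : ℂ :=
  ∫ θ in Set.Ioi (0 : ℝ), ((v + ((θ ^ α : ℝ) : ℂ))⁻¹) ^ (k + 1)

lemma slit_lower {v₀ : ℂ} (hv : v₀ ∈ Complex.slitPlane) :
    ∃ d > 0, ∃ κ > 0, ∀ v, ‖v - v₀‖ < d → ∀ x : ℝ, 0 ≤ x → κ * (1 + x) ≤ ‖v + x‖ := by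
  obtain ⟨D, hD, hD'⟩ : ∃ D > 0, ∀ x : ℝ, 0 ≤ x → D ≤ ‖v₀ + x‖ := by
    rcases hv with h | h
    · refine ⟨v₀.re, h, fun x hx => ?_⟩
      have := Complex.re_le_norm (v₀ + x)
      simp at this; linarith
    · refine ⟨|v₀.im|, abs_pos.2 h, fun x hx => ?_⟩
      have := Complex.abs_im_le_norm (v₀ + x)
      simpa using this
  have hK : 0 < 1 + (1 + ‖v₀‖ + D) / (D / 2) := by positivity
  refine ⟨D / 2, by positivity, (1 + (1 + ‖v₀‖ + D) / (D / 2))⁻¹, by positivity,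
    fun v hv x hx => ?_⟩
  rw [inv_mul_le_iff₀ hK]
  have h1 : D / 2 ≤ ‖v + x‖ := by
    have := norm_sub_norm_le (v₀ + x) (v₀ - v)
    rw [show v₀ + x - (v₀ - v) = v + x by ring, norm_sub_rev v₀ v] at this
    linarith [hD' x hx]
  have h2 : x ≤ ‖v + x‖ + (‖v₀‖ + D / 2) := by
    have := norm_sub_le (v + x) v
    rw [add_sub_cancel_left, Complex.norm_real, Real.norm_of_nonneg hx] at this
    have h3 := norm_add_le (v - v₀) v₀
    rw [sub_add_cancel] at h3
    linarith
  have h4 : 1 + ‖v₀‖ + D ≤ (1 + ‖v₀‖ + D) / (D / 2) * ‖v + x‖ := by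
    rw [div_mul_eq_mul_div, le_div_iff₀ (by positivity)]
    gcongr
  rw [add_mul, one_mul]
  linarith

lemma mI_integrable {α : ℝ} (hα : 1 < α) (k : ℕ) {v : ℂ} (hv : v ∈ Complex.slitPlane) :
    IntegrableOn (fun θ : ℝ => ((v + ((θ ^ α : ℝ) : ℂ))⁻¹) ^ (k + 1)) (Set.Ioi 0) := by
  obtain ⟨d, hd, κ, hκ, h⟩ := slit_lower hv
  obtain ⟨K, hK, hR⟩ := int_R hα k
  have hi := ((hR 1 one_pos).1.const_mul ((κ⁻¹) ^ (k + 1))).integrableOn (s := Set.Ioi (0:ℝ))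
  refine Integrable.mono' hi (by fun_prop) ?_
  refine (ae_restrict_mem measurableSet_Ioi).mono fun θ hθ => ?_
  have hθ' : (0 : ℝ) < θ := hθ
  rw [norm_pow, norm_inv, ← mul_pow, ← mul_inv, abs_of_pos hθ']
  gcongr
  exact h v (by simpa using hd) (θ ^ α) (by positivity)

lemma mI_hasDerivAt {α : ℝ} (hα : 1 < α) (k : ℕ) {v : ℂ} (hv : v ∈ Complex.slitPlane) :
    HasDerivAt (mI α k) (-(k + 1) * mI α (k + 1) v) v := by
  obtain ⟨d, hd, κ, hκ, h⟩ := slit_lower hv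
  obtain ⟨K, hK, hR⟩ := int_R hα (k + 1)
  have hi := (((hR 1 one_pos).1.const_mul ((κ⁻¹) ^ (k + 1 + 1))).const_mul
    ((k : ℝ) + 1)).integrableOn (s := Set.Ioi (0:ℝ))
  have key := hasDerivAt_integral_of_dominated_loc_of_deriv_le (𝕜 := ℂ)
    (μ := volume.restrict (Set.Ioi (0:ℝ)))
    (F := fun (v : ℂ) (θ : ℝ) => ((v + ((θ ^ α : ℝ) : ℂ))⁻¹) ^ (k + 1))
    (F' := fun (v : ℂ) (θ : ℝ) => -(k + 1) * ((v + ((θ ^ α : ℝ) : ℂ))⁻¹) ^ (k + 1 + 1))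
    (x₀ := v) (Metric.ball_mem_nhds v hd)
    (Eventually.of_forall fun w => by fun_prop)
    (mI_integrable hα k hv) (by fun_prop)
    (bound := fun θ => ((k : ℝ) + 1) * ((κ⁻¹) ^ (k + 1 + 1) * ((1 + |θ| ^ α)⁻¹) ^ (k + 1 + 1)))
    ?_ hi ?_
  · have := key.2
    rw [integral_const_mul] at this
    exact this
  · refine (ae_restrict_mem measurableSet_Ioi).mono fun θ hθ w hw => ?_
    have hθ' : (0 : ℝ) < θ := hθ
    rw [norm_mul, norm_pow, norm_inv, ← mul_pow, ← mul_inv, abs_of_pos hθ']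
    have e : ‖-((k : ℂ) + 1)‖ = (k : ℝ) + 1 := by
      rw [norm_neg]; norm_cast
    rw [e]
    gcongr
    exact h w (by simpa [dist_eq_norm] using hw) (θ ^ α) (by positivity)
  · refine (ae_restrict_mem measurableSet_Ioi).mono fun θ hθ w hw => ?_
    have hθ' : (0 : ℝ) < θ := hθ
    have hne : w + ((θ ^ α : ℝ) : ℂ) ≠ 0 := by
      have := h w (by simpa [dist_eq_norm] using hw) (θ ^ α) (by positivity)
      rw [← norm_pos_iff]
      exact lt_of_lt_of_le (by positivity) this
    have h1 : HasDerivAt (fun w : ℂ => w + ((θ ^ α : ℝ) : ℂ)) 1 w :=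
      (hasDerivAt_id w).add_const _
    convert! (h1.inv hne).pow (k + 1) using 1
    push_cast
    simp only [Pi.inv_apply, inv_pow]
    field_simp
    ring

lemma mI_scale {α : ℝ} (hα : 1 < α) {x : ℝ} (hx : 0 < x) :
    mI α 0 x = (x : ℂ) ^ ((1 / α - 1 : ℝ) : ℂ) * mI α 0 1 := by
  have hα0 : 0 < α := by linarith
  unfold mI
  have h := integral_comp_mul_left_Ioi (fun θ : ℝ => (((x : ℂ) + ((θ ^ α : ℝ) : ℂ))⁻¹) ^ (0 + 1))
    0 (b := x ^ (1 / α)) (by positivity)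
  rw [mul_zero] at h
  have hc : 0 < x ^ (1 / α) := by positivity
  have h2 : ∫ θ in Set.Ioi (0:ℝ), (((x : ℂ) + (((x ^ (1 / α) * θ) ^ α : ℝ) : ℂ))⁻¹) ^ (0 + 1)
     = (x : ℂ)⁻¹ * ∫ θ in Set.Ioi (0:ℝ), ((1 + ((θ ^ α : ℝ) : ℂ))⁻¹) ^ (0 + 1) := by
    rw [← integral_const_mul]
    refine setIntegral_congr_fun measurableSet_Ioi fun θ hθ => ?_
    have hθ' : (0 : ℝ) < θ := hθ
    have : (x ^ (1 / α) * θ) ^ α = x * θ ^ α := by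
      rw [Real.mul_rpow hc.le hθ'.le, ← Real.rpow_mul hx.le]
      field_simp; simp
    simp only [this]
    push_cast
    rw [pow_one, pow_one, ← mul_inv]
    ring_nf
  rw [h2] at h
  rw [sub_eq_add_neg, Complex.ofReal_add, Complex.cpow_add _ _ (by exact_mod_cast hx.ne'),
    ← Complex.ofReal_cpow hx.le, mul_assoc]
  simp only [Complex.ofReal_neg, Complex.ofReal_one, Complex.cpow_neg_one]
  rw [h, Complex.real_smul, ← mul_assoc, ← Complex.ofReal_mul, mul_inv_cancel₀ hc.ne']
  simp

lemma mI_zero {α : ℝ} (hα : 1 < α) {v : ℂ} (hv : v ∈ Complex.slitPlane) :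
    mI α 0 v = v ^ ((1 / α - 1 : ℝ) : ℂ) * mI α 0 1 := by
  have hf : AnalyticOnNhd ℂ (mI α 0) Complex.slitPlane :=
    DifferentiableOn.analyticOnNhd
      (fun w hw => (mI_hasDerivAt hα 0 hw).differentiableAt.differentiableWithinAt)
      Complex.isOpen_slitPlane
  have hg : AnalyticOnNhd ℂ (fun v : ℂ => v ^ ((1 / α - 1 : ℝ) : ℂ) * mI α 0 1)
      Complex.slitPlane :=
    DifferentiableOn.analyticOnNhd
      (fun w hw => ((differentiableAt_id.cpow_const hw).mul_const _).differentiableWithinAt)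
      Complex.isOpen_slitPlane
  have hconn : IsPreconnected Complex.slitPlane :=
    (Complex.starConvex_one_slitPlane.isPathConnected (by simp)).isConnected.isPreconnected
  refine hf.eqOn_of_preconnected_of_frequently_eq hg hconn (z₀ := 1) (by simp) ?_ hv
  have hseq : Tendsto (fun n : ℕ => ((1 + 1 / ((n : ℝ) + 1) : ℝ) : ℂ)) atTop (𝓝[≠] 1) := by
    rw [tendsto_nhdsWithin_iff]
    constructor
    · have := (tendsto_one_div_add_atTop_nhds_zero_nat (𝕜 := ℝ)).const_add 1
      rw [add_zero] at this
      exact_mod_cast (Complex.continuous_ofReal.tendsto _).comp this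
    · refine Eventually.of_forall fun n => ?_
      simp only [Set.mem_compl_iff, Set.mem_singleton_iff]
      have : (0:ℝ) < 1 / ((n : ℝ) + 1) := by positivity
      rw [show (1 : ℂ) = ((1 : ℝ) : ℂ) by simp, Complex.ofReal_inj]
      intro h; linarith
  refine hseq.frequently (Frequently.of_forall fun n => ?_)
  exact mI_scale hα (by positivity)

lemma mI_one {α : ℝ} (hα : 1 < α) :
    mI α 0 1 = ((Real.Gamma (1 / α + 1) * Real.Gamma (1 - 1 / α) : ℝ) : ℂ) := by
  have hα0 : 0 < α := by linarith
  have hreal : ∫ θ in Set.Ioi (0:ℝ), (1 + θ ^ α)⁻¹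
      = Real.Gamma (1 / α + 1) * Real.Gamma (1 - 1 / α) := by
    have hpos : 0 < 1 - 1 / α := by rw [sub_pos, div_lt_one hα0]; exact hα
    have i1 : ∀ s : ℝ, 0 < s → ∫⁻ θ in Set.Ioi (0:ℝ), ENNReal.ofReal (Real.exp (-s * (1 + θ ^ α)))
        = ENNReal.ofReal (Real.exp (-s) * (s ^ (-1 / α) * Real.Gamma (1 / α + 1))) := by
      intro s hs
      have e := integral_exp_neg_mul_rpow hα0 hs
      have hG : 0 < Real.Gamma (1 / α + 1) := Real.Gamma_pos_of_pos (by positivity)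
      have hintg : IntegrableOn (fun x : ℝ => Real.exp (-s * x ^ α)) (Set.Ioi 0) :=
        .of_integral_ne_zero (by rw [e]; positivity)
      rw [← e, ← integral_const_mul, ofReal_integral_eq_lintegral_ofReal (hintg.const_mul _)
        (Eventually.of_forall fun x => by positivity)]
      refine lintegral_congr fun x => ?_
      rw [← Real.exp_add]; ring_nf
    have i2 : ∀ c : ℝ, 0 < c → ∫⁻ s in Set.Ioi (0:ℝ), ENNReal.ofReal (Real.exp (-s * c))
        = ENNReal.ofReal (c⁻¹) := by
      intro c hc
      have e := integral_exp_mul_Ioi (a := -c) (by linarith) 0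
      have e' : ∫ s in Set.Ioi (0:ℝ), Real.exp (-c * s) = c⁻¹ := by
        rw [e]; simp [neg_div]
      have hintg : IntegrableOn (fun x : ℝ => Real.exp (-c * x)) (Set.Ioi 0) :=
        .of_integral_ne_zero (by rw [e']; positivity)
      rw [← e', ofReal_integral_eq_lintegral_ofReal hintg
        (Eventually.of_forall fun x => by positivity)]
      refine lintegral_congr fun x => ?_
      ring_nf
    have hswap : ∫⁻ θ in Set.Ioi (0:ℝ), ENNReal.ofReal ((1 + θ ^ α)⁻¹) =
        ∫⁻ s in Set.Ioi (0:ℝ), ENNReal.ofReal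
          (Real.exp (-s) * (s ^ (-1 / α) * Real.Gamma (1 / α + 1))) := by
      calc _ = ∫⁻ θ in Set.Ioi (0:ℝ), ∫⁻ s in Set.Ioi (0:ℝ),
            ENNReal.ofReal (Real.exp (-s * (1 + θ ^ α))) := by
            refine setLIntegral_congr_fun measurableSet_Ioi fun θ hθ => ?_
            have hθ' : (0 : ℝ) < θ := hθ
            exact (i2 _ (by positivity)).symm
        _ = ∫⁻ s in Set.Ioi (0:ℝ), ∫⁻ θ in Set.Ioi (0:ℝ),
            ENNReal.ofReal (Real.exp (-s * (1 + θ ^ α))) := by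
            refine lintegral_lintegral_swap (Measurable.aemeasurable ?_)
            fun_prop
        _ = _ := by
            refine setLIntegral_congr_fun measurableSet_Ioi fun s hs => ?_
            exact i1 s hs
    have hval : ∫ s in Set.Ioi (0:ℝ), Real.exp (-s) * (s ^ (-1 / α) * Real.Gamma (1 / α + 1))
        = Real.Gamma (1 / α + 1) * Real.Gamma (1 - 1 / α) := by
      rw [Real.Gamma_eq_integral hpos, ← integral_const_mul]
      refine setIntegral_congr_fun measurableSet_Ioi fun s hs => ?_
      have : (1 - 1 / α - 1) = -1 / α := by ring
      simp only [this]; ring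
    have a1 := integral_eq_lintegral_of_nonneg_ae (μ := volume.restrict (Set.Ioi (0:ℝ)))
      (f := fun θ : ℝ => (1 + θ ^ α)⁻¹)
      ((ae_restrict_mem measurableSet_Ioi).mono fun θ hθ => by
        have hθ' : (0 : ℝ) < θ := hθ
        positivity) (by fun_prop)
    have a2 := integral_eq_lintegral_of_nonneg_ae (μ := volume.restrict (Set.Ioi (0:ℝ)))
      (f := fun s : ℝ => Real.exp (-s) * (s ^ (-1 / α) * Real.Gamma (1 / α + 1)))
      ((ae_restrict_mem measurableSet_Ioi).mono fun θ hθ => by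
        have hθ' : (0 : ℝ) < θ := hθ
        have hG : 0 < Real.Gamma (1 / α + 1) := Real.Gamma_pos_of_pos (by positivity)
        positivity) (by fun_prop)
    rw [a1, hswap, ← a2, hval]
  rw [← hreal, ← integral_complex_ofReal]
  unfold mI
  refine setIntegral_congr_fun measurableSet_Ioi fun θ hθ => ?_
  simp


open MeasureTheory

/-- coefficients of the derivatives of the model -/
noncomputable def bc (α : ℝ) : ℕ → ℝ
  | 0 => 1
  | k + 1 => (k + 1 - 1 / α) / (k + 1) * bc α k

lemma mI_gen {α : ℝ} (hα : 1 < α) (k : ℕ) {v : ℂ} (hv : v ∈ Complex.slitPlane) :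
    mI α k v = bc α k * v ^ ((1 / α - (k + 1) : ℝ) : ℂ) * mI α 0 1 := by
  induction k generalizing v with
  | zero => simpa [bc] using mI_zero hα hv
  | succ k ih =>
    have h1 := mI_hasDerivAt hα k hv
    have hc : HasDerivAt (fun v : ℂ => v ^ ((1 / α - (k + 1) : ℝ) : ℂ))
        (((1 / α - (k + 1) : ℝ) : ℂ) * v ^ (((1 / α - (k + 1) : ℝ) : ℂ) - 1)) v := by
      have := (hasDerivAt_id v).cpow_const (c := ((1 / α - (k + 1) : ℝ) : ℂ)) hv
      simpa using this
    have h2 : HasDerivAt (mI α k) (bc α k * (((1 / α - (k + 1) : ℝ) : ℂ) *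
        v ^ (((1 / α - (k + 1) : ℝ) : ℂ) - 1)) * mI α 0 1) v := by
      refine ((hc.const_mul _).mul_const _).congr_of_eventuallyEq ?_
      filter_upwards [Complex.isOpen_slitPlane.mem_nhds hv] with w hw
      exact ih hw
    have h3 := h1.unique h2
    have hk : (-((k : ℂ) + 1)) ≠ 0 := by
      rw [neg_ne_zero]; exact_mod_cast Nat.succ_ne_zero k
    rw [← mul_right_inj' hk, h3]
    have e : (((1 / α - (k + 1) : ℝ) : ℂ) - 1) = ((1 / α - ((k + 1 : ℕ) + 1) : ℝ) : ℂ) := by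
      push_cast; ring
    rw [e]
    have hk' : ((k : ℂ) + 1) ≠ 0 := by exact_mod_cast Nat.succ_ne_zero k
    have e2 : -((k : ℂ) + 1) * (bc α (k + 1) : ℂ) = bc α k * ((1 / α - (k + 1) : ℝ) : ℂ) := by
      simp only [bc]
      push_cast
      field_simp
      ring
    rw [← mul_assoc, ← mul_assoc, ← mul_assoc, e2]

lemma sector {w ζ : ℂ} {s : ℝ} (hs : 0 < s) (hw : 0 ≤ w.re) (hζ : s * ‖ζ‖ ≤ ζ.re) :
    (1 + 2 / s)⁻¹ * (‖w‖ + ‖ζ‖) ≤ ‖w + ζ‖ := by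
  rw [inv_mul_le_iff₀ (by positivity)]
  have h1 : s * ‖ζ‖ ≤ ‖w + ζ‖ := by
    have := Complex.re_le_norm (w + ζ)
    rw [Complex.add_re] at this; linarith
  have h2 : ‖w‖ ≤ ‖w + ζ‖ + ‖ζ‖ := by
    have := norm_sub_le (w + ζ) ζ
    rwa [add_sub_cancel_right] at this
  have h3 : ‖ζ‖ ≤ ‖w + ζ‖ / s := by rw [le_div_iff₀ hs]; linarith
  calc ‖w‖ + ‖ζ‖ ≤ ‖w + ζ‖ + 2 * (‖w + ζ‖ / s) := by linarith
    _ = _ := by ring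

lemma div_slit {w c : ℂ} (hw : 0 < w.re) (hc : 0 < c.re) : w / c ∈ Complex.slitPlane := by
  have hc0 : c ≠ 0 := by rintro rfl; simp at hc
  rw [Complex.mem_slitPlane_iff_not_le_zero]
  intro h
  rw [Complex.le_def] at h
  have e : w / c = ((w / c).re : ℂ) := by
    apply Complex.ext <;> simp [h.2]
  have : w = ((w / c).re : ℂ) * c := by rw [← e]; field_simp
  have h2 : w.re = (w / c).re * c.re := by
    conv_lhs => rw [this]
    simp
  have := h.1
  simp only [Complex.zero_re] at this
  nlinarith

lemma div_cpow_re {w c : ℂ} (hw : 0 < w.re) (hc : 0 < c.re) (e : ℂ) :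
    (w / c) ^ e = w ^ e * c ^ (-e) := by
  have hc0 : c ≠ 0 := by rintro rfl; simp at hc
  have hw0 : w ≠ 0 := by rintro rfl; simp at hw
  have a1 := abs_lt.1 (Complex.abs_arg_lt_pi_div_two_iff.2 (Or.inl hw))
  have a2 := abs_lt.1 (Complex.abs_arg_lt_pi_div_two_iff.2 (Or.inl hc))
  have hpi : c.arg ≠ Real.pi := by intro h; rw [h] at a2; linarith [Real.pi_pos]
  rw [Complex.cpow_def_of_ne_zero (div_ne_zero hw0 hc0), Complex.cpow_def_of_ne_zero hw0,
    Complex.cpow_def_of_ne_zero hc0, ← Complex.exp_add, div_eq_mul_inv,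
    (Complex.log_mul_eq_add_log_iff hw0 (inv_ne_zero hc0)).2, Complex.log_inv _ hpi]
  · ring_nf
  · rw [Complex.arg_inv, if_neg hpi]
    constructor <;> linarith

lemma half_model {α : ℝ} (hα : 1 < α) (k : ℕ) {w c : ℂ} (hw : 0 < w.re) (hc : 0 < c.re) :
    ∫ θ in Set.Ioi (0 : ℝ), ((w + c * ((θ ^ α : ℝ) : ℂ))⁻¹) ^ (k + 1) =
      bc α k * mI α 0 1 * c ^ ((-(1 / α) : ℝ) : ℂ) * w ^ ((1 / α - (k + 1) : ℝ) : ℂ) := by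
  have hc0 : c ≠ 0 := by rintro rfl; simp at hc
  have h1 : ∫ θ in Set.Ioi (0 : ℝ), ((w + c * ((θ ^ α : ℝ) : ℂ))⁻¹) ^ (k + 1) =
      (c⁻¹) ^ (k + 1) * mI α k (w / c) := by
    unfold mI
    rw [← integral_const_mul]
    congr 1
    funext θ
    rw [← mul_pow, ← mul_inv, mul_add, mul_div_cancel₀ _ hc0]
  rw [h1, mI_gen hα k (div_slit hw hc), div_cpow_re hw hc]
  have h2 : (c⁻¹) ^ (k + 1) * c ^ (-((1 / α - (k + 1) : ℝ) : ℂ)) = c ^ ((-(1 / α) : ℝ) : ℂ) := by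
    have : ((-(1 / α) : ℝ) : ℂ) = -((1 / α - (k + 1) : ℝ) : ℂ) + -((k + 1 : ℕ) : ℂ) := by
      push_cast; ring
    rw [this, Complex.cpow_add _ _ hc0, Complex.cpow_neg c ((k + 1 : ℕ) : ℂ), Complex.cpow_natCast,
      inv_pow]
    ring
  rw [← h2]; ring

lemma full_model_bound {α s : ℝ} {cp cm : ℂ} (hs : 0 < s) (h1 : s ≤ ‖cp‖) (h2 : s ≤ ‖cm‖)
    (hcp : s * ‖cp‖ ≤ cp.re) (hcm : s * ‖cm‖ ≤ cm.re) (w : ℂ) (hw : 0 ≤ w.re) (θ : ℝ) :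
    (1 + 2 / s)⁻¹ * min 1 s * (‖w‖ + |θ| ^ α) ≤
      ‖w + (if 0 < θ then cp else cm) * ((|θ| ^ α : ℝ) : ℂ)‖ := by
  have hx : 0 ≤ |θ| ^ α := by positivity
  have key : ∀ c : ℂ, s ≤ ‖c‖ → s * ‖c‖ ≤ c.re → (1 + 2 / s)⁻¹ * min 1 s * (‖w‖ + |θ| ^ α) ≤
      ‖w + c * ((|θ| ^ α : ℝ) : ℂ)‖ := by
    intro c hc1 hc2
    refine le_trans ?_ (sector hs hw ?_)
    · rw [mul_assoc]
      gcongr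
      rw [mul_add, norm_mul, Complex.norm_real, Real.norm_of_nonneg hx]
      gcongr
      · exact mul_le_of_le_one_left (norm_nonneg _) (min_le_left _ _)
      · exact (min_le_right _ _).trans hc1
    · rw [norm_mul, Complex.norm_real, Real.norm_of_nonneg hx, Complex.re_mul_ofReal, ← mul_assoc]
      gcongr
  split_ifs
  · exact key cp h1 hcp
  · exact key cm h2 hcm

lemma full_model {α s : ℝ} (hα : 1 < α) (k : ℕ) {cp cm : ℂ} (hs : 0 < s) (h1 : s ≤ ‖cp‖)
    (h2 : s ≤ ‖cm‖)
    (hcp : s * ‖cp‖ ≤ cp.re) (hcm : s * ‖cm‖ ≤ cm.re) (w : ℂ) (hw : 0 < w.re) :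
    Integrable (fun θ : ℝ =>
      ((w + (if 0 < θ then cp else cm) * ((|θ| ^ α : ℝ) : ℂ))⁻¹) ^ (k + 1)) ∧
    ∫ θ : ℝ, ((w + (if 0 < θ then cp else cm) * ((|θ| ^ α : ℝ) : ℂ))⁻¹) ^ (k + 1) =
      bc α k * mI α 0 1 * (cp ^ ((-(1 / α) : ℝ) : ℂ) + cm ^ ((-(1 / α) : ℝ) : ℂ)) *
        w ^ ((1 / α - (k + 1) : ℝ) : ℂ) := by
  have hw0 : 0 < ‖w‖ := norm_pos_iff.2 (by rintro rfl; simp at hw)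
  obtain ⟨K, hK, hR⟩ := int_R hα k
  set κ := (1 + 2 / s)⁻¹ * min 1 s with hκ
  have hκ0 : 0 < κ := by positivity
  have hcp0 : 0 < cp.re := lt_of_lt_of_le (by have := hs.trans_le h1; positivity) hcp
  have hcm0 : 0 < cm.re := lt_of_lt_of_le (by have := hs.trans_le h2; positivity) hcm
  have hintg : Integrable (fun θ : ℝ =>
      ((w + (if 0 < θ then cp else cm) * ((|θ| ^ α : ℝ) : ℂ))⁻¹) ^ (k + 1)) := by
    refine ((hR _ hw0).1.const_mul ((κ⁻¹) ^ (k + 1))).mono' ?_ (Eventually.of_forall fun θ => ?_)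
    · have : Measurable (fun θ : ℝ => if 0 < θ then cp else cm) :=
        Measurable.ite (measurableSet_lt measurable_const measurable_id) measurable_const
          measurable_const
      exact Measurable.aestronglyMeasurable (by fun_prop)
    · rw [norm_pow, norm_inv, ← mul_pow, ← mul_inv]
      have := full_model_bound (α := α) hs h1 h2 hcp hcm w hw.le θ
      gcongr
  refine ⟨hintg, ?_⟩
  rw [← intervalIntegral.integral_Iic_add_Ioi (b := 0) hintg.integrableOn hintg.integrableOn]
  have e1 : ∫ θ in Set.Ioi (0:ℝ),
      ((w + (if 0 < θ then cp else cm) * ((|θ| ^ α : ℝ) : ℂ))⁻¹) ^ (k + 1) =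
      bc α k * mI α 0 1 * cp ^ ((-(1 / α) : ℝ) : ℂ) * w ^ ((1 / α - (k + 1) : ℝ) : ℂ) := by
    rw [← half_model hα k hw hcp0]
    refine setIntegral_congr_fun measurableSet_Ioi fun θ hθ => ?_
    have hθ' : (0 : ℝ) < θ := hθ
    simp only [hθ', if_true, abs_of_pos hθ']
  have e2 : ∫ θ in Set.Iic (0:ℝ),
      ((w + (if 0 < θ then cp else cm) * ((|θ| ^ α : ℝ) : ℂ))⁻¹) ^ (k + 1) =
      bc α k * mI α 0 1 * cm ^ ((-(1 / α) : ℝ) : ℂ) * w ^ ((1 / α - (k + 1) : ℝ) : ℂ) := by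
    rw [← half_model hα k hw hcm0, ← neg_zero, ← integral_comp_neg_Ioi, neg_zero]
    refine setIntegral_congr_fun measurableSet_Ioi fun θ hθ => ?_
    have hθ' : (0 : ℝ) < θ := hθ
    have : ¬ (0 < -θ) := by linarith
    simp only [this, if_false, abs_neg, abs_of_pos hθ']
  rw [e1, e2]; ring


open MeasureTheory

/-- the analytic facts about the characteristic function used below -/
structure PhiHyp (φ : ℝ → ℂ) (α s : ℝ) (cp cm : ℂ) : Prop where
  hα : 1 < α
  hs : 0 < s
  cont : Continuous φ
  zero : φ 0 = 1
  le_one : ∀ θ, ‖φ θ‖ ≤ 1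
  lt_one : ∀ θ, θ ≠ 0 → |θ| ≤ Real.pi → ‖φ θ‖ < 1
  cp_norm : s ≤ ‖cp‖
  cm_norm : s ≤ ‖cm‖
  cp_re : s * ‖cp‖ ≤ cp.re
  cm_re : s * ‖cm‖ ≤ cm.re
  pos : Tendsto (fun θ : ℝ => (1 - φ θ) / ((|θ| ^ α : ℝ) : ℂ)) (𝓝[>] 0) (𝓝 cp)
  neg : Tendsto (fun θ : ℝ => (1 - φ θ) / ((|θ| ^ α : ℝ) : ℂ)) (𝓝[<] 0) (𝓝 cm)

/-- leading term of `1 - φ` -/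
noncomputable def zet (α : ℝ) (cp cm : ℂ) (θ : ℝ) : ℂ :=
  (if 0 < θ then cp else cm) * ((|θ| ^ α : ℝ) : ℂ)

namespace PhiHyp

variable {φ : ℝ → ℂ} {α s : ℝ} {cp cm : ℂ}

lemma near (h : PhiHyp φ α s cp cm) {ε : ℝ} (hε : 0 < ε) :
    ∃ δ > 0, ∀ θ : ℝ, |θ| < δ → ‖1 - φ θ - zet α cp cm θ‖ ≤ ε * |θ| ^ α ∧ ‖1 - φ θ‖ ≤ ε := by
  have hα0 : 0 < α := by linarith [h.hα]
  have hp := (Metric.tendsto_nhdsWithin_nhds.1 h.pos) ε hε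
  have hn := (Metric.tendsto_nhdsWithin_nhds.1 h.neg) ε hε
  have hc := (Metric.continuous_iff.1 h.cont) 0 ε hε
  obtain ⟨d1, hd1, h1⟩ := hp
  obtain ⟨d2, hd2, h2⟩ := hn
  obtain ⟨d3, hd3, h3⟩ := hc
  have key : ∀ (c : ℂ) (θ : ℝ), θ ≠ 0 → ‖(1 - φ θ) / ((|θ| ^ α : ℝ) : ℂ) - c‖ < ε →
      ‖1 - φ θ - c * ((|θ| ^ α : ℝ) : ℂ)‖ ≤ ε * |θ| ^ α := by
    intro c θ hθ hlt
    have hx : 0 < |θ| ^ α := by have := abs_pos.2 hθ; positivity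
    have hx' : ((|θ| ^ α : ℝ) : ℂ) ≠ 0 := by exact_mod_cast hx.ne'
    have e : 1 - φ θ - c * ((|θ| ^ α : ℝ) : ℂ) =
        ((1 - φ θ) / ((|θ| ^ α : ℝ) : ℂ) - c) * ((|θ| ^ α : ℝ) : ℂ) := by
      field_simp
    rw [e, norm_mul, Complex.norm_real, Real.norm_of_nonneg hx.le]
    gcongr
  refine ⟨min d1 (min d2 d3), by positivity, fun θ hθ => ⟨?_, ?_⟩⟩
  · rw [lt_min_iff, lt_min_iff] at hθ
    rcases lt_trichotomy θ 0 with hlt | heq | hgt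
    · simp only [zet, not_lt.2 hlt.le, if_false]
      exact key cm θ hlt.ne (by
        have := h2 (x := θ) hlt (by simpa using hθ.2.1)
        rwa [dist_eq_norm] at this)
    · subst heq
      simp [zet, h.zero, Real.zero_rpow hα0.ne']
    · simp only [zet, hgt, if_true]
      exact key cp θ hgt.ne' (by
        have := h1 (x := θ) hgt (by simpa using hθ.1)
        rwa [dist_eq_norm] at this)
  · rw [lt_min_iff, lt_min_iff] at hθ
    have := h3 θ (by simpa using hθ.2.2)
    rw [h.zero, dist_eq_norm, norm_sub_rev] at this
    exact this.le

lemma diff_bound {z a ζ : ℂ} {ε x : ℝ} (h1 : ‖1 - a - ζ‖ ≤ ε * x) (h2 : ‖1 - a‖ ≤ ε) :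
    ‖(1 - z * a) - ((1 - z) + ζ)‖ ≤ ε * (‖1 - z‖ + x) := by
  have e : (1 - z * a) - ((1 - z) + ζ) = -((1 - z) * (1 - a)) + (1 - a - ζ) := by ring
  rw [e]
  refine (norm_add_le _ _).trans ?_
  rw [norm_neg, norm_mul, mul_add, mul_comm ε ‖1 - z‖]
  gcongr

lemma model_lower (h : PhiHyp φ α s cp cm) : ∃ κ > 0, ∀ w : ℂ, 0 ≤ w.re → ∀ θ : ℝ,
    κ * (‖w‖ + |θ| ^ α) ≤ ‖w + zet α cp cm θ‖ :=
  ⟨(1 + 2 / s)⁻¹ * min 1 s, by have := h.hs; positivity, fun w hw θ =>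
    full_model_bound h.hs h.cp_norm h.cm_norm h.cp_re h.cm_re w hw θ⟩

lemma re_one_sub {z : ℂ} (hz : ‖z‖ < 1) : 0 < (1 - z).re := by
  have := Complex.re_le_norm z
  rw [Complex.sub_re, Complex.one_re]; linarith

lemma lower (h : PhiHyp φ α s cp cm) : ∃ κ > 0, ∀ z : ℂ, ‖z‖ < 1 → ∀ θ : ℝ, |θ| ≤ Real.pi →
    κ * (‖1 - z‖ + |θ| ^ α) ≤ ‖1 - z * φ θ‖ := by
  have hα0 : 0 < α := by linarith [h.hα]
  obtain ⟨κ, hκ, hm⟩ := h.model_lower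
  obtain ⟨δ, hδ, hnear⟩ := h.near (half_pos hκ)
  set δ' := min δ 1
  have hδ' : 0 < δ' := by positivity
  have hcomp : IsCompact {θ : ℝ | δ' ≤ |θ| ∧ |θ| ≤ Real.pi} := by
    refine (isCompact_Icc (a := -Real.pi) (b := Real.pi)).of_isClosed_subset ?_ ?_
    · exact (isClosed_le continuous_const continuous_abs).inter
        (isClosed_le continuous_abs continuous_const)
    · intro θ hθ; exact abs_le.1 hθ.2
  have hne : {θ : ℝ | δ' ≤ |θ| ∧ |θ| ≤ Real.pi}.Nonempty := by
    refine ⟨1, ?_, ?_⟩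
    · simp [δ']
    · simp; linarith [Real.pi_gt_three]
  obtain ⟨θ₀, hθ₀, hmax⟩ := hcomp.exists_isMaxOn hne (h.cont.norm.continuousOn)
  have hM : ‖φ θ₀‖ < 1 := h.lt_one θ₀ (by
    intro h0; rw [h0] at hθ₀; have := hθ₀.1; simp at this; linarith) hθ₀.2
  have hP : 0 < 2 + Real.pi ^ α := by have := Real.pi_pos; positivity
  refine ⟨min (κ / 2) ((1 - ‖φ θ₀‖) / (2 + Real.pi ^ α)),
    lt_min (half_pos hκ) (div_pos (by linarith) hP), fun z hz θ hθ => ?_⟩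
  by_cases hlt : |θ| < δ'
  · have hn := hnear θ (hlt.trans_le (min_le_left _ _))
    have h1 := hm (1 - z) (re_one_sub hz).le θ
    have h2 := diff_bound (z := z) hn.1 hn.2
    have h3 := norm_sub_norm_le ((1 - z) + zet α cp cm θ) (((1 - z) + zet α cp cm θ) - (1 - z * φ θ))
    rw [sub_sub_cancel, norm_sub_rev ((1 - z) + zet α cp cm θ)] at h3
    calc _ ≤ κ / 2 * (‖1 - z‖ + |θ| ^ α) := by gcongr; exact min_le_left _ _
      _ ≤ _ := by linarith
  · have h1 : ‖φ θ‖ ≤ ‖φ θ₀‖ := hmax (show θ ∈ {θ : ℝ | δ' ≤ |θ| ∧ |θ| ≤ Real.pi} from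
      ⟨not_lt.1 hlt, hθ⟩)
    have h2 : 1 - ‖φ θ₀‖ ≤ ‖1 - z * φ θ‖ := by
      have := norm_sub_norm_le (1 : ℂ) (z * φ θ)
      rw [norm_one, norm_mul] at this
      have : ‖z‖ * ‖φ θ‖ ≤ 1 * ‖φ θ‖ := by gcongr
      linarith
    have h3 : ‖1 - z‖ + |θ| ^ α ≤ 2 + Real.pi ^ α := by
      have := norm_sub_le (1 : ℂ) z
      rw [norm_one] at this
      gcongr
      linarith
    calc _ ≤ (1 - ‖φ θ₀‖) / (2 + Real.pi ^ α) * (2 + Real.pi ^ α) := by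
          exact mul_le_mul (min_le_right _ _) h3 (by positivity) (div_nonneg (by linarith) hP.le)
      _ = 1 - ‖φ θ₀‖ := by field_simp
      _ ≤ _ := h2

/-- integrands -/
noncomputable def TT (φ : ℝ → ℂ) (k : ℕ) (z : ℂ) (θ : ℝ) : ℂ :=
  φ θ ^ k * ((1 - z * φ θ)⁻¹) ^ (k + 1)

noncomputable def YY (α : ℝ) (cp cm : ℂ) (z : ℂ) (θ : ℝ) : ℂ := ((1 - z) + zet α cp cm θ)⁻¹

noncomputable def RR (α : ℝ) (z : ℂ) (θ : ℝ) : ℝ := (‖1 - z‖ + |θ| ^ α)⁻¹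

lemma one_sub_pos {z : ℂ} (hz : ‖z‖ < 1) : 0 < ‖1 - z‖ := by
  rw [norm_pos_iff]; intro h0
  have := re_one_sub hz
  rw [h0] at this; simp at this

lemma RR_pos {z : ℂ} (hz : ‖z‖ < 1) (θ : ℝ) : 0 < RR α z θ := by
  have := one_sub_pos hz
  unfold RR; positivity

lemma bounds (h : PhiHyp φ α s cp cm) : ∃ C > 0,
    (∀ z : ℂ, ‖z‖ < 1 → ∀ θ : ℝ, |θ| ≤ Real.pi → ‖(1 - z * φ θ)⁻¹‖ ≤ C * RR α z θ ∧
      1 - z * φ θ ≠ 0) ∧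
    (∀ z : ℂ, ‖z‖ < 1 → ∀ θ : ℝ, ‖YY α cp cm z θ‖ ≤ C * RR α z θ ∧
      (1 - z) + zet α cp cm θ ≠ 0) := by
  obtain ⟨κ, hκ, hm⟩ := h.model_lower
  obtain ⟨κ', hκ', hm'⟩ := h.lower
  have aux : ∀ (k : ℝ) (r : ℝ) (x : ℂ), 0 < k → 0 < r → k * r ≤ ‖x‖ → 
      ‖x⁻¹‖ ≤ k⁻¹ * r⁻¹ ∧ x ≠ 0 := by
    intro k r x hk hr hx
    refine ⟨?_, ?_⟩
    · rw [norm_inv, ← mul_inv]; gcongr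
    · rw [← norm_pos_iff]; exact lt_of_lt_of_le (by positivity) hx
  refine ⟨max κ⁻¹ κ'⁻¹, by positivity, fun z hz θ hθ => ?_, fun z hz θ => ?_⟩
  · have := one_sub_pos hz
    have := aux κ' (‖1 - z‖ + |θ| ^ α) _ hκ' (by positivity) (hm' z hz θ hθ)
    refine ⟨this.1.trans ?_, this.2⟩
    exact mul_le_mul_of_nonneg_right (le_max_right _ _) (RR_pos hz θ).le
  · have := one_sub_pos hz
    have := aux κ (‖1 - z‖ + |θ| ^ α) _ hκ (by positivity) (hm (1 - z) (re_one_sub hz).le θ)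
    refine ⟨this.1.trans ?_, this.2⟩
    exact mul_le_mul_of_nonneg_right (le_max_left _ _) (RR_pos hz θ).le

lemma TT_bound (h : PhiHyp φ α s cp cm) {C : ℝ}
    (hC : ∀ z : ℂ, ‖z‖ < 1 → ∀ θ : ℝ, |θ| ≤ Real.pi → ‖(1 - z * φ θ)⁻¹‖ ≤ C * RR α z θ ∧
      1 - z * φ θ ≠ 0) (k : ℕ) {z : ℂ} (hz : ‖z‖ < 1) {θ : ℝ} (hθ : |θ| ≤ Real.pi) :
    ‖TT φ k z θ‖ ≤ C ^ (k + 1) * RR α z θ ^ (k + 1) := by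
  unfold TT
  rw [norm_mul, norm_pow, norm_pow, ← mul_pow]
  have h1 : ‖φ θ‖ ^ k ≤ 1 := pow_le_one₀ (norm_nonneg _) (h.le_one θ)
  have h2 := (hC z hz θ hθ).1
  calc _ ≤ 1 * ‖(1 - z * φ θ)⁻¹‖ ^ (k + 1) := by gcongr
    _ ≤ _ := by rw [one_mul]; gcongr

lemma approx (h : PhiHyp φ α s cp cm) (k : ℕ) : ∀ ε > 0, ∃ δ > 0, ∀ z : ℂ, ‖z‖ < 1 →
    ∀ θ : ℝ, |θ| < δ → |θ| ≤ Real.pi →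
    ‖TT φ k z θ - YY α cp cm z θ ^ (k + 1)‖ ≤ ε * RR α z θ ^ (k + 1) := by
  obtain ⟨C, hC, hX, hY⟩ := h.bounds
  have base : ∀ ε > 0, ∃ δ > 0, ∀ z : ℂ, ‖z‖ < 1 → ∀ θ : ℝ, |θ| < δ → |θ| ≤ Real.pi →
      ‖(1 - z * φ θ)⁻¹ - YY α cp cm z θ‖ ≤ ε * RR α z θ ∧ ‖1 - φ θ‖ ≤ ε := by
    intro ε hε
    obtain ⟨δ, hδ, hn⟩ := h.near (ε := min ε (ε / C ^ 2)) (by positivity)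
    refine ⟨δ, hδ, fun z hz θ hθ hθ' => ⟨?_, (hn θ hθ).2.trans (min_le_left _ _)⟩⟩
    obtain ⟨x1, x2⟩ := hX z hz θ hθ'
    obtain ⟨y1, y2⟩ := hY z hz θ
    have hd := diff_bound (z := z) (hn θ hθ).1 (hn θ hθ).2
    have hpos := one_sub_pos hz
    have e : (1 - z * φ θ)⁻¹ - YY α cp cm z θ =
        (((1 - z) + zet α cp cm θ) - (1 - z * φ θ)) * ((1 - z * φ θ)⁻¹ * YY α cp cm z θ) := by
      unfold YY; field_simp
    rw [e, norm_mul, norm_mul, norm_sub_rev]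
    have hR := RR_pos (α := α) hz θ
    have hRi : (‖1 - z‖ + |θ| ^ α) * RR α z θ = 1 := by
      unfold RR; exact mul_inv_cancel₀ (by positivity)
    calc _ ≤ (ε / C ^ 2 * (‖1 - z‖ + |θ| ^ α)) * ((C * RR α z θ) * (C * RR α z θ)) := by
          gcongr
          refine hd.trans ?_
          gcongr
          exact min_le_right _ _
      _ = ε * ((‖1 - z‖ + |θ| ^ α) * RR α z θ) * RR α z θ := by field_simp
      _ = _ := by rw [hRi, mul_one]
  induction k with
  | zero =>
    intro ε hε
    obtain ⟨δ, hδ, hb⟩ := base ε hε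
    refine ⟨δ, hδ, fun z hz θ h1 h2 => ?_⟩
    simpa [TT] using (hb z hz θ h1 h2).1
  | succ k ih =>
    intro ε hε
    have hD : 0 < (C + 1) * C ^ (k + 1) + C := by positivity
    set ε' := ε / ((C + 1) * C ^ (k + 1) + C) with hε'
    have hε'0 : 0 < ε' := by positivity
    obtain ⟨δ1, hδ1, hb⟩ := base ε' hε'0
    obtain ⟨δ2, hδ2, hi⟩ := ih ε' hε'0
    refine ⟨min δ1 δ2, by positivity, fun z hz θ h1 h2 => ?_⟩
    rw [lt_min_iff] at h1
    obtain ⟨b1, b2⟩ := hb z hz θ h1.1 h2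
    have i1 := hi z hz θ h1.2 h2
    have hR := RR_pos (α := α) hz θ
    have t1 := h.TT_bound hX k hz h2
    have e : TT φ (k + 1) z θ - YY α cp cm z θ ^ (k + 1 + 1) =
        (((1 - z * φ θ)⁻¹ - YY α cp cm z θ) - (1 - φ θ) * (1 - z * φ θ)⁻¹) * TT φ k z θ +
        YY α cp cm z θ * (TT φ k z θ - YY α cp cm z θ ^ (k + 1)) := by
      unfold TT; ring
    rw [e]
    have x1 := (hX z hz θ h2).1
    have y1 := (hY z hz θ).1
    calc _ ≤ (‖(1 - z * φ θ)⁻¹ - YY α cp cm z θ‖ + ‖1 - φ θ‖ * ‖(1 - z * φ θ)⁻¹‖) * ‖TT φ k z θ‖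
          + ‖YY α cp cm z θ‖ * ‖TT φ k z θ - YY α cp cm z θ ^ (k + 1)‖ := by
          refine (norm_add_le _ _).trans ?_
          rw [norm_mul, norm_mul]
          gcongr
          refine (norm_sub_le _ _).trans ?_
          rw [norm_mul]
      _ ≤ (ε' * RR α z θ + ε' * (C * RR α z θ)) * (C ^ (k + 1) * RR α z θ ^ (k + 1))
          + (C * RR α z θ) * (ε' * RR α z θ ^ (k + 1)) := by gcongr
      _ = ε' * ((C + 1) * C ^ (k + 1) + C) * RR α z θ ^ (k + 1 + 1) := by ring
      _ = _ := by rw [hε', div_mul_cancel₀ _ hD.ne']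

end PhiHyp


open MeasureTheory

namespace PhiHyp

variable {φ : ℝ → ℂ} {α s : ℝ} {cp cm : ℂ}

noncomputable def UU (φ : ℝ → ℂ) (k : ℕ) (z : ℂ) : ℂ := ∫ θ in (-Real.pi)..Real.pi, TT φ k z θ

noncomputable def LL (α : ℝ) (cp cm : ℂ) : ℂ :=
  mI α 0 1 * (cp ^ ((-(1 / α) : ℝ) : ℂ) + cm ^ ((-(1 / α) : ℝ) : ℂ))

lemma TT_cont (h : PhiHyp φ α s cp cm) (k : ℕ) {z : ℂ} (hz : ‖z‖ < 1) : Continuous (TT φ k z) := by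
  unfold TT
  have hc := h.cont
  refine (hc.pow k).mul (Continuous.pow (Continuous.inv₀ (by fun_prop) ?_) _)
  intro θ h0
  have h1 : z * φ θ = 1 := by rw [sub_eq_zero] at h0; exact h0.symm
  have h2 : ‖z‖ * ‖φ θ‖ = 1 := by rw [← norm_mul, h1, norm_one]
  have h3 := h.le_one θ
  nlinarith [norm_nonneg z, norm_nonneg (φ θ)]

lemma UU_eq (φ : ℝ → ℂ) (k : ℕ) (z : ℂ) :
    UU φ k z = ∫ θ, (Set.Ioc (-Real.pi) Real.pi).indicator (TT φ k z) θ := by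
  unfold UU
  rw [intervalIntegral.integral_of_le (by linarith [Real.pi_pos]),
    integral_indicator measurableSet_Ioc]

lemma UU_approx (h : PhiHyp φ α s cp cm) (k : ℕ) : ∀ ε > 0, ∃ K ≥ 0, ∀ z : ℂ, ‖z‖ < 1 →
    ‖UU φ k z - bc α k * LL α cp cm * (1 - z) ^ ((1 / α - (k + 1) : ℝ) : ℂ)‖
      ≤ ε * ‖1 - z‖ ^ (1 / α - (k + 1)) + K := by
  intro ε hε
  have hα0 : 0 < α := by linarith [h.hα]
  obtain ⟨C, hC, hX, hY⟩ := h.bounds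
  obtain ⟨K, hK, hR⟩ := int_R h.hα k
  obtain ⟨δ, hδ, hap⟩ := h.approx k (ε / (K + 1)) (by positivity)
  set δ' := min δ Real.pi with hδ'def
  have hδ' : 0 < δ' := lt_min hδ Real.pi_pos
  set cd := (δ' ^ α)⁻¹ + 1 with hcd
  have hcd0 : 0 < cd := by positivity
  set K2 := ∫ θ : ℝ, ((1 + |θ| ^ α)⁻¹) ^ (k + 1) with hK2
  have hK20 : 0 ≤ K2 := integral_nonneg fun θ => by positivity
  refine ⟨2 * C ^ (k + 1) * cd ^ (k + 1) * K2, by positivity, fun z hz => ?_⟩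
  have hpos := one_sub_pos hz
  obtain ⟨m1, m2⟩ := full_model h.hα k h.hs h.cp_norm h.cm_norm h.cp_re h.cm_re (1 - z)
    (re_one_sub hz)
  have hYi : Integrable (fun θ => YY α cp cm z θ ^ (k + 1)) := m1
  have hYe : ∫ θ, YY α cp cm z θ ^ (k + 1) =
      bc α k * LL α cp cm * (1 - z) ^ ((1 / α - (k + 1) : ℝ) : ℂ) := by
    unfold LL; rw [← mul_assoc]; exact m2
  have hTi : Integrable ((Set.Ioc (-Real.pi) Real.pi).indicator (TT φ k z)) := by
    rw [integrable_indicator_iff measurableSet_Ioc]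
    exact ((h.TT_cont k hz).integrableOn_Icc).mono_set Set.Ioc_subset_Icc_self
  rw [UU_eq, ← hYe, ← integral_sub hTi hYi]
  obtain ⟨r1, r2⟩ := hR ‖1 - z‖ hpos
  obtain ⟨r3, -⟩ := hR 1 one_pos
  have hbd : ∀ θ : ℝ, ‖(Set.Ioc (-Real.pi) Real.pi).indicator (TT φ k z) θ - YY α cp cm z θ ^ (k + 1)‖
      ≤ ε / (K + 1) * ((‖1 - z‖ + |θ| ^ α)⁻¹) ^ (k + 1) +
        2 * C ^ (k + 1) * cd ^ (k + 1) * ((1 + |θ| ^ α)⁻¹) ^ (k + 1) := by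
    intro θ
    by_cases hθ : |θ| < δ'
    · have h1 : |θ| < Real.pi := hθ.trans_le (min_le_right _ _)
      have hm : θ ∈ Set.Ioc (-Real.pi) Real.pi := ⟨(abs_lt.1 h1).1, (abs_lt.1 h1).2.le⟩
      rw [Set.indicator_of_mem hm]
      have := hap z hz θ (hθ.trans_le (min_le_left _ _)) h1.le
      refine this.trans ?_
      have : 0 ≤ 2 * C ^ (k + 1) * cd ^ (k + 1) * ((1 + |θ| ^ α)⁻¹) ^ (k + 1) := by positivity
      unfold RR; linarith
    · rw [not_lt] at hθ
      have hR0 := RR_pos (α := α) hz θ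
      have hθ0 : 0 < |θ| := hδ'.trans_le hθ
      have hRle : RR α z θ ≤ cd * (1 + |θ| ^ α)⁻¹ := by
        unfold RR
        have hx : 0 < |θ| ^ α := by positivity
        have hx2 : δ' ^ α ≤ |θ| ^ α := by gcongr
        calc _ ≤ (|θ| ^ α)⁻¹ := by gcongr; linarith
          _ = ((|θ| ^ α)⁻¹ + 1) * (1 + |θ| ^ α)⁻¹ := by field_simp
          _ ≤ _ := by rw [hcd]; gcongr
      have hT : ‖(Set.Ioc (-Real.pi) Real.pi).indicator (TT φ k z) θ‖ ≤
          C ^ (k + 1) * RR α z θ ^ (k + 1) := by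
        by_cases hm : θ ∈ Set.Ioc (-Real.pi) Real.pi
        · rw [Set.indicator_of_mem hm]
          exact h.TT_bound hX k hz (abs_le.2 ⟨hm.1.le, hm.2⟩)
        · rw [Set.indicator_of_notMem hm, norm_zero]; positivity
      have hYb : ‖YY α cp cm z θ ^ (k + 1)‖ ≤ C ^ (k + 1) * RR α z θ ^ (k + 1) := by
        rw [norm_pow, ← mul_pow]
        have := (hY z hz θ).1
        gcongr
      calc _ ≤ 2 * C ^ (k + 1) * RR α z θ ^ (k + 1) := by
            refine (norm_sub_le _ _).trans ?_; linarith
        _ ≤ 2 * C ^ (k + 1) * (cd * (1 + |θ| ^ α)⁻¹) ^ (k + 1) := by gcongr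
        _ = 2 * C ^ (k + 1) * cd ^ (k + 1) * ((1 + |θ| ^ α)⁻¹) ^ (k + 1) := by
            rw [mul_pow]; ring
        _ ≤ _ := by
            have : 0 ≤ ε / (K + 1) * ((‖1 - z‖ + |θ| ^ α)⁻¹) ^ (k + 1) := by positivity
            linarith
  have hfin := norm_integral_le_of_norm_le ((r1.const_mul (ε / (K + 1))).add
    (r3.const_mul (2 * C ^ (k + 1) * cd ^ (k + 1)))) (ae_of_all _ hbd)
  refine hfin.trans ?_
  simp only [Pi.add_apply]
  rw [integral_add (r1.const_mul _) (r3.const_mul _), integral_const_mul, integral_const_mul]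
  refine add_le_add ?_ le_rfl
  calc _ ≤ ε / (K + 1) * (K * ‖1 - z‖ ^ (1 / α - (k + 1))) := by gcongr
    _ = (K / (K + 1)) * (ε * ‖1 - z‖ ^ (1 / α - (k + 1))) := by ring
    _ ≤ 1 * (ε * ‖1 - z‖ ^ (1 / α - (k + 1))) := by
        gcongr
        rw [div_le_one (by positivity)]; linarith
    _ = _ := one_mul _

lemma UU_re (h : PhiHyp φ α s cp cm) {z : ℂ} (hz : ‖z‖ < 1) : Real.pi ≤ (UU φ 0 z).re := by
  have hpp := Real.pi_pos
  have hc := h.TT_cont 0 hz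
  have e : (UU φ 0 z).re = ∫ θ in (-Real.pi)..Real.pi, (TT φ 0 z θ).re := by
    have := intervalIntegral.intervalIntegral_re (𝕜 := ℂ)
      (hc.intervalIntegrable (μ := volume) (-Real.pi) Real.pi)
    exact this.symm
  rw [e]
  have : ∫ θ in (-Real.pi)..Real.pi, (1 / 2 : ℝ) ≤ ∫ θ in (-Real.pi)..Real.pi, (TT φ 0 z θ).re := by
    refine intervalIntegral.integral_mono_on (by linarith) (by simp) ?_ ?_
    · exact (Complex.continuous_re.comp hc).intervalIntegrable _ _
    · intro θ _
      have hw : ‖z * φ θ‖ < 1 := by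
        rw [norm_mul]
        have := h.le_one θ
        nlinarith [norm_nonneg z, norm_nonneg (φ θ)]
      simp only [TT, pow_zero, one_mul, zero_add, pow_one]
      set w := z * φ θ
      have hwsq : Complex.normSq w < 1 := by
        rw [Complex.normSq_eq_norm_sq]; nlinarith [norm_nonneg w]
      rw [Complex.inv_re]
      have h1 : 0 < Complex.normSq (1 - w) := by
        rw [Complex.normSq_pos]
        intro h0; rw [sub_eq_zero] at h0; rw [← h0] at hw; simp at hw
      rw [div_le_div_iff₀ (by norm_num) h1]
      rw [Complex.normSq_apply] at *
      simp only [Complex.sub_re, Complex.one_re, Complex.sub_im, Complex.one_im] at *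
      nlinarith
  rw [intervalIntegral.integral_const] at this
  simp at this
  linarith

lemma UU_ne (h : PhiHyp φ α s cp cm) {z : ℂ} (hz : ‖z‖ < 1) : UU φ 0 z ≠ 0 := by
  intro h0
  have := h.UU_re hz
  rw [h0] at this
  simp at this
  linarith [Real.pi_pos]

lemma UU_deriv (h : PhiHyp φ α s cp cm) (k : ℕ) {z : ℂ} (hz : ‖z‖ < 1) :
    HasDerivAt (UU φ k) ((k + 1) * UU φ (k + 1) z) z := by
  have hq : 0 < (1 - ‖z‖) / 2 := by linarith
  have hball : ∀ x ∈ Metric.ball z ((1 - ‖z‖) / 2), ‖x‖ ≤ (1 + ‖z‖) / 2 := by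
    intro x hx
    rw [Metric.mem_ball, dist_eq_norm] at hx
    have := norm_sub_norm_le x z
    linarith
  have hlow : ∀ x ∈ Metric.ball z ((1 - ‖z‖) / 2), ∀ θ, (1 - ‖z‖) / 2 ≤ ‖1 - x * φ θ‖ := by
    intro x hx θ
    have h1 := norm_sub_norm_le (1 : ℂ) (x * φ θ)
    rw [norm_one, norm_mul] at h1
    have h2 : ‖x‖ * ‖φ θ‖ ≤ ‖x‖ * 1 := by gcongr; exact h.le_one θ
    linarith [hball x hx]
  have key := intervalIntegral.hasDerivAt_integral_of_dominated_loc_of_deriv_le (𝕜 := ℂ)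
    (μ := volume) (a := -Real.pi) (b := Real.pi) (F := fun z θ => TT φ k z θ)
    (F' := fun z θ => (k + 1) * TT φ (k + 1) z θ) (x₀ := z)
    (s := Metric.ball z ((1 - ‖z‖) / 2)) (bound := fun _ => (k + 1) * (((1 - ‖z‖) / 2)⁻¹) ^ (k + 1 + 1))
    (Metric.ball_mem_nhds z hq) ?_ ?_ ?_ ?_ ?_ ?_
  · have := key.2
    rw [intervalIntegral.integral_const_mul] at this
    exact this
  · filter_upwards [Metric.ball_mem_nhds z hq] with x hx
    exact (h.TT_cont k (by linarith [hball x hx])).aestronglyMeasurable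
  · exact (h.TT_cont k hz).intervalIntegrable _ _
  · exact (continuous_const.mul (h.TT_cont (k + 1) hz)).aestronglyMeasurable
  · refine ae_of_all _ fun θ _ x hx => ?_
    unfold TT
    rw [norm_mul, norm_mul, norm_pow, norm_pow, norm_inv]
    have h1 : ‖φ θ‖ ^ (k + 1) ≤ 1 := pow_le_one₀ (norm_nonneg _) (h.le_one θ)
    have h2 := hlow x hx θ
    have h3 : ‖(k + 1 : ℂ)‖ = k + 1 := by
      have : (k + 1 : ℂ) = ((k + 1 : ℕ) : ℂ) := by push_cast; rfl
      rw [this, Complex.norm_natCast]; push_cast; rfl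
    rw [h3]
    calc _ ≤ (k + 1 : ℝ) * (1 * ((((1 - ‖z‖) / 2)⁻¹) ^ (k + 1 + 1))) := by gcongr
      _ = _ := by rw [one_mul]
  · simp
  · refine ae_of_all _ fun θ _ x hx => ?_
    have hne : 1 - x * φ θ ≠ 0 := by
      rw [← norm_pos_iff]; exact hq.trans_le (hlow x hx θ)
    have d1 : HasDerivAt (fun x : ℂ => 1 - x * φ θ) (-(φ θ)) x := by
      simpa using ((hasDerivAt_id x).mul_const (φ θ)).const_sub 1
    have d2 := ((d1.fun_inv hne).fun_pow (k + 1)).const_mul (φ θ ^ k)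
    unfold TT
    refine HasDerivAt.congr_deriv d2 ?_
    have e1 : k + 1 - 1 = k := rfl
    rw [e1, neg_neg, div_eq_mul_inv, ← inv_pow]
    push_cast
    ring

end PhiHyp


open MeasureTheory

namespace PhiHyp

variable {φ : ℝ → ℂ} {α s : ℝ} {cp cm : ℂ}

noncomputable def PP (α : ℝ) (z : ℂ) : ℂ := (1 - z) ^ ((1 / α : ℝ) : ℂ)

noncomputable def F2 (φ : ℝ → ℂ) (z : ℂ) : ℂ :=
  4 * Real.pi * (UU φ 2 z / UU φ 0 z ^ 2 - UU φ 1 z ^ 2 / UU φ 0 z ^ 3)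

lemma one_sub_ne {z : ℂ} (hz : ‖z‖ < 1) : 1 - z ≠ 0 := norm_pos_iff.1 (one_sub_pos hz)

lemma PP_ne {z : ℂ} (hz : ‖z‖ < 1) : PP α z ≠ 0 := by
  unfold PP
  rw [Complex.cpow_ne_zero_iff]
  exact Or.inl (one_sub_ne hz)

lemma PP_norm (z : ℂ) : ‖PP α z‖ = ‖1 - z‖ ^ (1 / α) := by
  unfold PP; rw [Complex.norm_cpow_real]

lemma PP_div {z : ℂ} (hz : ‖z‖ < 1) (k : ℕ) :
    (1 - z) ^ ((1 / α - (k + 1) : ℝ) : ℂ) = PP α z / (1 - z) ^ (k + 1) := by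
  unfold PP
  rw [Complex.ofReal_sub, Complex.cpow_sub _ _ (one_sub_ne hz)]
  congr 1
  have : ((k + 1 : ℝ) : ℂ) = ((k + 1 : ℕ) : ℂ) := by push_cast; rfl
  rw [this, Complex.cpow_natCast]

lemma PP_inv {z : ℂ} (hz : ‖z‖ < 1) :
    (1 - z) ^ ((-(1 + 1 / α) : ℝ) : ℂ) = ((1 - z) * PP α z)⁻¹ := by
  unfold PP
  rw [Complex.ofReal_neg, Complex.cpow_neg, Complex.ofReal_add, Complex.cpow_add _ _ (one_sub_ne hz)]
  simp

noncomputable def VV (φ : ℝ → ℂ) (α : ℝ) (k : ℕ) (z : ℂ) : ℂ := UU φ k z * (1 - z) ^ (k + 1) / PP α z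

lemma VV_tendsto (h : PhiHyp φ α s cp cm) (k : ℕ) :
    Tendsto (VV φ α k) (𝓝[Metric.ball 0 1] 1) (𝓝 (bc α k * LL α cp cm)) := by
  have hα0 : 0 < α := by linarith [h.hα]
  rw [Metric.tendsto_nhds]
  intro ε hε
  obtain ⟨K, hK, hb⟩ := h.UU_approx k (ε / 2) (by positivity)
  have hexp : 0 < (k + 1 : ℝ) - 1 / α := by
    have : 1 / α < 1 := by rw [div_lt_one hα0]; exact h.hα
    have : (0:ℝ) ≤ k := Nat.cast_nonneg k
    linarith
  have ht : Tendsto (fun z : ℂ => K * ‖1 - z‖ ^ ((k + 1 : ℝ) - 1 / α)) (𝓝[Metric.ball 0 1] 1) (𝓝 0) := by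
    have : ContinuousAt (fun z : ℂ => K * ‖1 - z‖ ^ ((k + 1 : ℝ) - 1 / α)) 1 := by
      refine continuousAt_const.mul (ContinuousAt.rpow_const (by fun_prop) (Or.inr hexp.le))
    have h2 := this.tendsto
    simp only [sub_self, norm_zero, Real.zero_rpow hexp.ne', mul_zero] at h2
    exact h2.mono_left nhdsWithin_le_nhds
  filter_upwards [self_mem_nhdsWithin, ht.eventually (gt_mem_nhds (half_pos hε))] with z hz hlt
  have hz1 : ‖z‖ < 1 := by simpa using hz
  have hb1 := hb z hz1
  rw [PP_div hz1] at hb1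
  have hpos := one_sub_pos hz1
  have hu := one_sub_ne hz1
  have hP := PP_ne (α := α) hz1
  rw [dist_eq_norm]
  have e : VV φ α k z - bc α k * LL α cp cm =
      (UU φ k z - bc α k * LL α cp cm * (PP α z / (1 - z) ^ (k + 1))) * ((1 - z) ^ (k + 1) / PP α z) := by
    unfold VV; field_simp
  have en : ‖(1 - z) ^ (k + 1) / PP α z‖ = ‖1 - z‖ ^ ((k + 1 : ℝ) - 1 / α) := by
    rw [norm_div, norm_pow, PP_norm, Real.rpow_sub hpos]
    congr 1
    rw [← Real.rpow_natCast]; push_cast; rfl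
  rw [e, norm_mul, en]
  have e2 : ‖1 - z‖ ^ (1 / α - (k + 1 : ℝ)) * ‖1 - z‖ ^ ((k + 1 : ℝ) - 1 / α) = 1 := by
    rw [← Real.rpow_add hpos]; simp
  calc _ ≤ (ε / 2 * ‖1 - z‖ ^ (1 / α - (k + 1 : ℝ)) + K) * ‖1 - z‖ ^ ((k + 1 : ℝ) - 1 / α) := by gcongr
    _ = ε / 2 * (‖1 - z‖ ^ (1 / α - (k + 1 : ℝ)) * ‖1 - z‖ ^ ((k + 1 : ℝ) - 1 / α)) +
        K * ‖1 - z‖ ^ ((k + 1 : ℝ) - 1 / α) := by ring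
    _ < ε := by rw [e2]; linarith

noncomputable def DD (α : ℝ) (cp cm : ℂ) : ℂ :=
  2 * Real.pi * ((1 - 1 / α) * (1 / α)) / LL α cp cm

lemma F2_tendsto (h : PhiHyp φ α s cp cm) (hL : LL α cp cm ≠ 0) :
    Tendsto (fun z => F2 φ z * ((1 - z) * PP α z)) (𝓝[Metric.ball 0 1] 1) (𝓝 (DD α cp cm)) := by
  have hα0 : 0 < α := by linarith [h.hα]
  have t0 := h.VV_tendsto 0
  have t1 := h.VV_tendsto 1
  have t2 := h.VV_tendsto 2
  have hb0 : ((bc α 0 : ℝ) : ℂ) * LL α cp cm ≠ 0 := by simp [bc, hL]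
  have key := ((t2.div (t0.pow 2) (pow_ne_zero 2 hb0)).sub
    ((t1.pow 2).div (t0.pow 3) (pow_ne_zero 3 hb0))).const_mul ((4 * Real.pi : ℂ))
  have hlim : (4 * Real.pi : ℂ) * (bc α 2 * LL α cp cm / (bc α 0 * LL α cp cm) ^ 2 -
      (bc α 1 * LL α cp cm) ^ 2 / (bc α 0 * LL α cp cm) ^ 3) = DD α cp cm := by
    have hαc : (α : ℂ) ≠ 0 := by exact_mod_cast hα0.ne'
    simp only [bc, DD]
    push_cast
    field_simp
    ring
  rw [hlim] at key
  refine key.congr' ?_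
  filter_upwards [self_mem_nhdsWithin] with z hz
  have hz1 : ‖z‖ < 1 := by simpa using hz
  have hu := one_sub_ne hz1
  have hP := PP_ne (α := α) hz1
  have hU := h.UU_ne hz1
  simp only [VV, F2, Pi.div_apply]
  field_simp
  ring

lemma UU_bdd (h : PhiHyp φ α s cp cm) (k : ℕ) {δ : ℝ} (hδ : 0 < δ) : ∃ M ≥ 0, ∀ z : ℂ, ‖z‖ < 1 →
    δ ≤ ‖1 - z‖ → ‖UU φ k z‖ ≤ M := by
  obtain ⟨C, hC, hX, -⟩ := h.bounds
  have hα0 : 0 < α := by linarith [h.hα]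
  refine ⟨(C ^ (k + 1) * (δ⁻¹) ^ (k + 1)) * |Real.pi - -Real.pi|, by positivity, fun z hz hd => ?_⟩
  refine intervalIntegral.norm_integral_le_of_norm_le_const fun θ hθ => ?_
  rw [Set.uIoc_of_le (by linarith [Real.pi_pos])] at hθ
  refine (h.TT_bound hX k hz (abs_le.2 ⟨hθ.1.le, hθ.2⟩)).trans ?_
  have := RR_pos (α := α) hz θ
  have h2 : RR α z θ ≤ δ⁻¹ := by
    unfold RR
    gcongr
    have : 0 ≤ |θ| ^ α := by positivity
    linarith
  gcongr

lemma F2_approx (h : PhiHyp φ α s cp cm) (hL : LL α cp cm ≠ 0) : ∀ ε > 0, ∃ K ≥ 0, ∀ z : ℂ,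
    ‖z‖ < 1 → ‖F2 φ z - DD α cp cm * (1 - z) ^ ((-(1 + 1 / α) : ℝ) : ℂ)‖ ≤
      ε * ‖1 - z‖ ^ (-(1 + 1 / α)) + K := by
  intro ε hε
  have hα0 : 0 < α := by linarith [h.hα]
  obtain ⟨δ, hδ, hd⟩ := Metric.tendsto_nhdsWithin_nhds.1 (h.F2_tendsto hL) ε hε
  obtain ⟨M0, hM0, h0⟩ := h.UU_bdd 0 hδ
  obtain ⟨M1, hM1, h1⟩ := h.UU_bdd 1 hδ
  obtain ⟨M2, hM2, h2⟩ := h.UU_bdd 2 hδ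
  have hpp := Real.pi_pos
  refine ⟨4 * Real.pi * (M2 / Real.pi ^ 2 + M1 ^ 2 / Real.pi ^ 3) + ‖DD α cp cm‖ * δ ^ (-(1 + 1 / α)),
    by positivity, fun z hz => ?_⟩
  have hpos := one_sub_pos hz
  have hu := one_sub_ne hz
  have hP := PP_ne (α := α) hz
  have hnorm : ‖(1 - z) ^ ((-(1 + 1 / α) : ℝ) : ℂ)‖ = ‖1 - z‖ ^ (-(1 + 1 / α)) :=
    Complex.norm_cpow_real _ _
  by_cases hc : ‖1 - z‖ < δ
  · have := hd (x := z) (by simpa using hz) (by rwa [dist_eq_norm, norm_sub_rev])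
    rw [dist_eq_norm] at this
    have e : F2 φ z - DD α cp cm * (1 - z) ^ ((-(1 + 1 / α) : ℝ) : ℂ) =
        (F2 φ z * ((1 - z) * PP α z) - DD α cp cm) * (1 - z) ^ ((-(1 + 1 / α) : ℝ) : ℂ) := by
      rw [PP_inv hz]; field_simp
    rw [e, norm_mul, hnorm]
    have h3 : 0 ≤ 4 * Real.pi * (M2 / Real.pi ^ 2 + M1 ^ 2 / Real.pi ^ 3) +
      ‖DD α cp cm‖ * δ ^ (-(1 + 1 / α)) := by positivity
    refine le_trans ?_ (le_add_of_nonneg_right h3)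
    gcongr
  · rw [not_lt] at hc
    have hU : Real.pi ≤ ‖UU φ 0 z‖ := (h.UU_re hz).trans (Complex.re_le_norm _)
    have b1 := h1 z hz hc
    have b2 := h2 z hz hc
    have hF : ‖F2 φ z‖ ≤ 4 * Real.pi * (M2 / Real.pi ^ 2 + M1 ^ 2 / Real.pi ^ 3) := by
      unfold F2
      rw [norm_mul, norm_mul, Complex.norm_real, Real.norm_of_nonneg hpp.le, Complex.norm_ofNat]
      gcongr
      refine (norm_sub_le _ _).trans ?_
      rw [norm_div, norm_div, norm_pow, norm_pow, norm_pow]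
      gcongr
    have hr : ‖1 - z‖ ^ (-(1 + 1 / α)) ≤ δ ^ (-(1 + 1 / α)) := by
      apply Real.rpow_le_rpow_of_nonpos hδ hc
      have : 0 < 1 / α := by positivity
      linarith
    calc _ ≤ ‖F2 φ z‖ + ‖DD α cp cm‖ * ‖1 - z‖ ^ (-(1 + 1 / α)) := by
          refine (norm_sub_le _ _).trans ?_
          rw [norm_mul, hnorm]
      _ ≤ 4 * Real.pi * (M2 / Real.pi ^ 2 + M1 ^ 2 / Real.pi ^ 3) +
          ‖DD α cp cm‖ * δ ^ (-(1 + 1 / α)) := by gcongr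
      _ ≤ _ := by
          have : 0 ≤ ε * ‖1 - z‖ ^ (-(1 + 1 / α)) := by positivity
          linarith

lemma F_deriv (h : PhiHyp φ α s cp cm) {z : ℂ} (hz : ‖z‖ < 1) :
    HasDerivAt (fun z => 1 - 2 * Real.pi / UU φ 0 z) (2 * Real.pi * UU φ 1 z / UU φ 0 z ^ 2) z := by
  have d := h.UU_deriv 0 hz
  have hU := h.UU_ne hz
  have := ((d.fun_inv hU).const_mul (2 * Real.pi : ℂ)).const_sub 1
  simp only [← div_eq_mul_inv] at this
  refine this.congr_deriv ?_
  push_cast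
  ring

lemma F_deriv2 (h : PhiHyp φ α s cp cm) {z : ℂ} (hz : ‖z‖ < 1) :
    HasDerivAt (fun z => 2 * Real.pi * UU φ 1 z / UU φ 0 z ^ 2) (F2 φ z) z := by
  have d := h.UU_deriv 0 hz
  have d1 := h.UU_deriv 1 hz
  have hU := h.UU_ne hz
  have := (d1.const_mul (2 * Real.pi : ℂ)).fun_div (d.fun_pow 2) (pow_ne_zero 2 hU)
  refine this.congr_deriv ?_
  unfold F2
  push_cast
  field_simp
  ring

end PhiHyp


open MeasureTheory

/-- a scalar power series -/
lemma fps_of_hasSum {h : ℕ → ℂ} {H : ℂ → ℂ}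
    (hs : ∀ᶠ z in 𝓝 (0 : ℂ), HasSum (fun n => h n * z ^ n) (H z)) :
    HasFPowerSeriesAt H (FormalMultilinearSeries.ofScalars ℂ h) 0 := by
  rw [hasFPowerSeriesAt_iff]
  filter_upwards [hs] with z hz
  simpa [FormalMultilinearSeries.coeff_ofScalars, mul_comm] using hz

lemma cauchy_bound {h : ℕ → ℂ} {H : ℂ → ℂ}
    (hs : ∀ᶠ z in 𝓝 (0 : ℂ), HasSum (fun n => h n * z ^ n) (H z))
    (hd : DifferentiableOn ℂ H (Metric.ball 0 1)) {r : ℝ} (hr0 : 0 < r) (hr1 : r < 1) (n : ℕ) :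
    ‖h n‖ ≤ ((2 * Real.pi)⁻¹ * ∫ θ in (-Real.pi)..Real.pi, ‖H (circleMap 0 r θ)‖) * r⁻¹ ^ n := by
  lift r to NNReal using hr0.le
  have hc : DiffContOnCl ℂ H (Metric.ball 0 r) := by
    refine DifferentiableOn.diffContOnCl (hd.mono ?_)
    rw [closure_ball _ hr0.ne']
    exact Metric.closedBall_subset_ball hr1
  have h1 := hc.hasFPowerSeriesOnBall (by exact_mod_cast hr0)
  have h2 := h1.hasFPowerSeriesAt.eq_formalMultilinearSeries (fps_of_hasSum hs)
  have h3 := norm_cauchyPowerSeries_le H 0 r n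
  rw [h2, FormalMultilinearSeries.norm_apply_eq_norm_coef,
    FormalMultilinearSeries.coeff_ofScalars] at h3
  have hper : Function.Periodic (fun θ => ‖H (circleMap 0 r θ)‖) (2 * Real.pi) := by
    intro θ
    simp only [periodic_circleMap 0 r θ]
  have h4 := hper.intervalIntegral_add_eq 0 (-Real.pi)
  have e1 : -Real.pi + 2 * Real.pi = Real.pi := by ring
  rw [zero_add, e1] at h4
  rw [h4, abs_of_pos hr0] at h3
  exact h3

lemma circle_lower {r τ : ℝ} (hr : 1 / 2 ≤ r) (hr1 : r < 1) (hτ : |τ| ≤ Real.pi) :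
    (1 / 4) * ((1 - r) + |τ|) ≤ ‖1 - circleMap 0 r τ‖ := by
  have hcos := Real.cos_le_one_sub_mul_cos_sq hτ
  have hsq : ‖1 - circleMap 0 r τ‖ ^ 2 = (1 - r) ^ 2 + 2 * r * (1 - Real.cos τ) := by
    rw [← Complex.normSq_eq_norm_sq, Complex.normSq_apply]
    simp only [circleMap, zero_add, Complex.sub_re, Complex.one_re, Complex.sub_im, Complex.one_im,
      Complex.re_ofReal_mul, Complex.im_ofReal_mul, Complex.exp_ofReal_mul_I_re,
      Complex.exp_ofReal_mul_I_im]
    have := Real.sin_sq_add_cos_sq τ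
    linear_combination r ^ 2 * this
  have hc1 := Real.cos_le_one τ
  have hpi : 2 / Real.pi ^ 2 ≥ 1 / 8 := by
    have := Real.pi_lt_four
    have := Real.pi_pos
    rw [ge_iff_le, div_le_div_iff₀ (by norm_num) (by positivity)]
    nlinarith
  have hτ2 : 0 ≤ τ ^ 2 := sq_nonneg τ
  refine abs_le_of_sq_le_sq' ?_ (norm_nonneg _) |>.2
  rw [hsq]
  have habs : |τ| ^ 2 = τ ^ 2 := sq_abs τ
  have : (1 / 8) * τ ^ 2 ≤ 1 - Real.cos τ := by nlinarith
  nlinarith [sq_nonneg ((1 - r) - |τ|)]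

lemma coeff_small {h : ℕ → ℂ} {H : ℂ → ℂ} {a : ℝ} (ha : 1 < a)
    (hs : ∀ᶠ z in 𝓝 (0 : ℂ), HasSum (fun n => h n * z ^ n) (H z))
    (hd : DifferentiableOn ℂ H (Metric.ball 0 1))
    (hb : ∀ ε > 0, ∃ K ≥ 0, ∀ z : ℂ, ‖z‖ < 1 → ‖H z‖ ≤ ε * ‖1 - z‖ ^ (-a) + K) :
    Tendsto (fun n : ℕ => ‖h n‖ / ((n : ℝ) + 1) ^ (a - 1)) atTop (𝓝 0) := by
  have hpp := Real.pi_pos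
  obtain ⟨J, hJ, hintg⟩ := int_add_abs ha
  rw [Metric.tendsto_nhds]
  intro η hη
  set q : ℝ := (2 * Real.pi)⁻¹ * Real.exp 1 with hq
  have hq0 : 0 < q := by positivity
  set W : ℝ := q * ((1 / 4 : ℝ) ^ (-a) * (J + 1)) with hW
  have hW0 : 0 < W := by positivity
  obtain ⟨K, hK, hbK⟩ := hb (η / 2 / W) (by positivity)
  have ht : Tendsto (fun n : ℕ => (q * (2 * Real.pi * K)) / ((n : ℝ) + 1) ^ (a - 1)) atTop (𝓝 0) := by
    refine Tendsto.div_atTop tendsto_const_nhds ?_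
    exact (tendsto_rpow_atTop (by linarith)).comp
      (tendsto_atTop_add_const_right _ _ tendsto_natCast_atTop_atTop)
  filter_upwards [ht.eventually (gt_mem_nhds (half_pos hη)), eventually_ge_atTop 1] with n hn hn1
  have hnR : (1 : ℝ) ≤ n := by exact_mod_cast hn1
  set r : ℝ := n / (n + 1) with hr
  have hr1' : 1 - r = (n + 1 : ℝ)⁻¹ := by rw [hr]; field_simp; ring
  have hr1 : r < 1 := by
    have : 0 < (n + 1 : ℝ)⁻¹ := by positivity
    linarith
  have hr2 : 1 / 2 ≤ r := by
    rw [hr, div_le_div_iff₀ (by norm_num) (by positivity)]; linarith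
  have hr0 : 0 < r := by linarith
  have hcb := cauchy_bound hs hd hr0 hr1 n
  have hpow : r⁻¹ ^ n ≤ Real.exp 1 := by
    have e : r⁻¹ = 1 / n + 1 := by rw [hr]; field_simp; ring
    calc r⁻¹ ^ n ≤ (Real.exp (1 / n)) ^ n := by
          rw [e]; gcongr; exact Real.add_one_le_exp _
      _ = Real.exp 1 := by
          rw [← Real.exp_nat_mul]; congr 1; field_simp
  obtain ⟨i1, i2⟩ := hintg (1 - r) (by linarith)
  have hnormc : ∀ τ, ‖circleMap 0 r τ‖ < 1 := by
    intro τ; rw [norm_circleMap_zero, abs_of_pos hr0]; exact hr1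
  have hI : ∫ θ in (-Real.pi)..Real.pi, ‖H (circleMap 0 r θ)‖ ≤
      η / 2 / W * (1 / 4 : ℝ) ^ (-a) * (J * (1 - r) ^ (1 - a)) + 2 * Real.pi * K := by
    have hpt : ∀ τ ∈ Set.Icc (-Real.pi) Real.pi, ‖H (circleMap 0 r τ)‖ ≤
        η / 2 / W * (1 / 4 : ℝ) ^ (-a) * ((1 - r) + |τ|) ^ (-a) + K := by
      intro τ hτ
      refine (hbK _ (hnormc τ)).trans ?_
      have h1 := circle_lower hr2 hr1 (abs_le.2 hτ)
      have hpos : 0 < (1 - r) + |τ| := by have := abs_nonneg τ; linarith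
      have h2 : ‖1 - circleMap 0 r τ‖ ^ (-a) ≤ (1 / 4 : ℝ) ^ (-a) * ((1 - r) + |τ|) ^ (-a) := by
        rw [← Real.mul_rpow (by norm_num) hpos.le]
        exact Real.rpow_le_rpow_of_nonpos (by positivity) h1 (by linarith)
      rw [mul_assoc]
      gcongr
    have hcontH : Continuous (fun τ => ‖H (circleMap 0 r τ)‖) := by
      refine continuous_norm.comp (hd.continuousOn.comp_continuous (continuous_circleMap 0 r) ?_)
      intro τ; simpa using hnormc τ
    have hi2 : IntervalIntegrable (fun τ => η / 2 / W * (1 / 4 : ℝ) ^ (-a) * ((1 - r) + |τ|) ^ (-a))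
        volume (-Real.pi) Real.pi := (i1.const_mul _).intervalIntegrable
    refine (intervalIntegral.integral_mono_on (by linarith) (hcontH.intervalIntegrable _ _)
      (hi2.add intervalIntegrable_const) hpt).trans ?_
    rw [intervalIntegral.integral_add hi2 intervalIntegrable_const,
      intervalIntegral.integral_const_mul, intervalIntegral.integral_const]
    have e3 : (Real.pi - -Real.pi) • K = 2 * Real.pi * K := by rw [smul_eq_mul]; ring
    rw [e3]
    gcongr
    rw [← i2, intervalIntegral.integral_of_le (by linarith)]
    refine setIntegral_le_integral i1 (ae_of_all _ fun τ => ?_)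
    have : 0 < (1 - r) + |τ| := by have := abs_nonneg τ; linarith
    positivity
  have hx : (1 - r) ^ (1 - a) = ((n : ℝ) + 1) ^ (a - 1) := by
    rw [hr1', Real.inv_rpow (by positivity), ← Real.rpow_neg (by positivity)]; congr 1; ring
  rw [hx] at hI
  have hN : 0 < ((n : ℝ) + 1) ^ (a - 1) := by positivity
  have hmain : ‖h n‖ ≤ η / 2 * ((n : ℝ) + 1) ^ (a - 1) + q * (2 * Real.pi * K) := by
    calc ‖h n‖ ≤ ((2 * Real.pi)⁻¹ * (η / 2 / W * (1 / 4 : ℝ) ^ (-a) * (J * ((n : ℝ) + 1) ^ (a - 1))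
          + 2 * Real.pi * K)) * Real.exp 1 := by
          refine hcb.trans ?_
          gcongr
      _ = (η / 2 / W) * (q * ((1 / 4 : ℝ) ^ (-a) * J)) * ((n : ℝ) + 1) ^ (a - 1)
          + q * (2 * Real.pi * K) := by rw [hq]; ring
      _ ≤ (η / 2 / W) * W * ((n : ℝ) + 1) ^ (a - 1) + q * (2 * Real.pi * K) := by
          gcongr
          rw [hW]; gcongr; linarith
      _ = _ := by rw [div_mul_cancel₀ _ hW0.ne']
  rw [dist_zero_right, Real.norm_of_nonneg (by positivity)]
  calc _ ≤ (η / 2 * ((n : ℝ) + 1) ^ (a - 1) + q * (2 * Real.pi * K)) / ((n : ℝ) + 1) ^ (a - 1) := by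
        gcongr
    _ = η / 2 + q * (2 * Real.pi * K) / ((n : ℝ) + 1) ^ (a - 1) := by field_simp
    _ < η := by linarith

/-- Taylor coefficients at zero -/
noncomputable def cf (H : ℂ → ℂ) (n : ℕ) : ℂ := iteratedDeriv n H 0 / (n.factorial : ℂ)

lemma cf_hasSum {H : ℂ → ℂ} (hd : DifferentiableOn ℂ H (Metric.ball 0 1)) {z : ℂ} (hz : ‖z‖ < 1) :
    HasSum (fun n => cf H n * z ^ n) (H z) := by
  have := Complex.hasSum_taylorSeries_on_ball (r := 1) (c := 0) (f := H) (by simpa using hd)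
    (z := z) (by simpa using hz)
  refine this.congr_fun fun n => ?_
  unfold cf
  rw [sub_zero, smul_eq_mul, smul_eq_mul]
  ring

lemma ball_ev : ∀ᶠ z in 𝓝 (0 : ℂ), ‖z‖ < 1 := by
  filter_upwards [Metric.ball_mem_nhds (0 : ℂ) one_pos] with z hz
  simpa using hz

lemma cf_unique {h : ℕ → ℂ} {H : ℂ → ℂ} (hd : DifferentiableOn ℂ H (Metric.ball 0 1))
    (hs : ∀ᶠ z in 𝓝 (0 : ℂ), HasSum (fun n => h n * z ^ n) (H z)) (n : ℕ) : h n = cf H n := by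
  have h1 := fps_of_hasSum hs
  have h2 := fps_of_hasSum (h := cf H) (H := H) (ball_ev.mono fun z hz => cf_hasSum hd hz)
  have h3 := h1.eq_formalMultilinearSeries h2
  have := congrArg (fun p => FormalMultilinearSeries.coeff p n) h3
  simpa [FormalMultilinearSeries.coeff_ofScalars] using this

lemma cf_deriv {H H' : ℂ → ℂ} (hd : ∀ z : ℂ, ‖z‖ < 1 → HasDerivAt H (H' z) z) (n : ℕ) :
    cf H' n = (n + 1) * cf H (n + 1) := by
  unfold cf
  have e : deriv H =ᶠ[𝓝 0] H' := ball_ev.mono fun z hz => (hd z hz).deriv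
  rw [iteratedDeriv_succ', e.iteratedDeriv_eq n, Nat.factorial_succ]
  have : (n.factorial : ℂ) ≠ 0 := by exact_mod_cast n.factorial_ne_zero
  have : (n + 1 : ℂ) ≠ 0 := by exact_mod_cast n.succ_ne_zero
  push_cast
  field_simp

noncomputable def bb (a : ℝ) (n : ℕ) : ℝ := (∏ j ∈ Finset.range n, (a + j)) / n.factorial

lemma bb_hasSum (a : ℝ) {z : ℂ} (hz : ‖z‖ < 1) :
    HasSum (fun n => (bb a n : ℂ) * z ^ n) ((1 - z) ^ ((-a : ℝ) : ℂ)) := by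
  have h1 := (Complex.one_div_one_sub_cpow_hasFPowerSeriesOnBall_zero (a : ℂ)).hasSum (y := z) (by
    simpa [enorm_eq_nnnorm, ← NNReal.coe_lt_coe] using hz)
  have e : ∀ n : ℕ, Ring.choose ((a : ℂ) + n - 1) n = (bb a n : ℂ) := by
    intro n
    have h2 := Ring.factorial_nsmul_multichoose_eq_ascPochhammer (a : ℂ) n
    rw [Ring.multichoose_eq, Polynomial.ascPochhammer_smeval_eq_eval, nsmul_eq_mul] at h2
    have hf : (n.factorial : ℂ) ≠ 0 := by exact_mod_cast n.factorial_ne_zero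
    have h3 : ∀ n : ℕ, (ascPochhammer ℂ n).eval (a : ℂ) = ∏ j ∈ Finset.range n, ((a : ℂ) + j) := by
      intro n
      induction n with
      | zero => simp
      | succ n ih => rw [ascPochhammer_succ_eval, ih, Finset.prod_range_succ]
    rw [h3] at h2
    unfold bb
    push_cast
    rw [eq_div_iff hf, mul_comm]; exact h2
  simp only [zero_add, FormalMultilinearSeries.ofScalars_apply_eq, e] at h1
  rw [Complex.ofReal_neg, Complex.cpow_neg, ← one_div]
  simpa using h1

lemma bb_tendsto {a : ℝ} (ha : 0 < a) :
    Tendsto (fun n : ℕ => bb a n / (n : ℝ) ^ (a - 1)) atTop (𝓝 (Real.Gamma a)⁻¹) := by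
  have h1 := (Real.GammaSeq_tendsto_Gamma a).inv₀ (Real.Gamma_pos_of_pos ha).ne'
  have h2 : Tendsto (fun n : ℕ => (n : ℝ) / (n + a)) atTop (𝓝 1) := by
    exact tendsto_natCast_div_add_atTop a
  have h3 := h2.mul h1
  rw [one_mul] at h3
  refine h3.congr' ?_
  filter_upwards [eventually_ge_atTop 1] with n hn
  have hnR : (0 : ℝ) < n := by exact_mod_cast hn
  unfold bb Real.GammaSeq
  rw [Finset.prod_range_succ, Real.rpow_sub_one hnR.ne']
  have hf : (n.factorial : ℝ) ≠ 0 := by exact_mod_cast n.factorial_ne_zero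
  have : (0:ℝ) < (n : ℝ) ^ a := by positivity
  have : (0 : ℝ) < ∏ j ∈ Finset.range n, (a + j) := Finset.prod_pos fun j _ => by positivity
  have : 0 < (n : ℝ) + a := by positivity
  have : 0 < a + (n : ℝ) := by positivity
  rw [inv_div]
  field_simp
  ring


open MeasureTheory

namespace PhiHyp

variable {φ : ℝ → ℂ} {α s : ℝ} {cp cm : ℂ}

lemma coeff_asymp (h : PhiHyp φ α s cp cm) (hL : LL α cp cm ≠ 0) {f : ℕ → ℝ}
    (hf : ∀ z : ℂ, ‖z‖ < 1 → HasSum (fun n => (f n : ℂ) * z ^ n) (1 - 2 * Real.pi / UU φ 0 z)) :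
    Tendsto (fun n : ℕ => (f n : ℂ) / (((n : ℝ) ^ (-2 + 1 / α) : ℝ) : ℂ)) atTop
      (𝓝 (DD α cp cm * ((Real.Gamma (1 + 1 / α))⁻¹ : ℝ))) := by
  have hα0 : 0 < α := by linarith [h.hα]
  have hα1 : 0 < 1 / α := by positivity
  have hdF : DifferentiableOn ℂ (fun z => 1 - 2 * Real.pi / UU φ 0 z) (Metric.ball 0 1) :=
    fun z hz => (h.F_deriv (by simpa using hz)).differentiableAt.differentiableWithinAt
  have hdU : ∀ (k : ℕ) (z : ℂ), ‖z‖ < 1 → DifferentiableAt ℂ (UU φ k) z :=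
    fun k z hz => (h.UU_deriv k hz).differentiableAt
  have hdF2 : DifferentiableOn ℂ (F2 φ) (Metric.ball 0 1) := by
    intro z hz
    have hz : ‖z‖ < 1 := by simpa using hz
    have hU := h.UU_ne hz
    refine DifferentiableAt.differentiableWithinAt ?_
    unfold F2
    exact (((hdU 2 z hz).fun_div ((hdU 0 z hz).fun_pow 2) (pow_ne_zero 2 hU)).fun_sub
      (((hdU 1 z hz).fun_pow 2).fun_div ((hdU 0 z hz).fun_pow 3) (pow_ne_zero 3 hU))).const_mul _
  have hdP : DifferentiableOn ℂ (fun z : ℂ => (1 - z) ^ ((-(1 + 1 / α) : ℝ) : ℂ)) (Metric.ball 0 1) := by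
    intro z hz
    have hz : ‖z‖ < 1 := by simpa using hz
    refine DifferentiableAt.differentiableWithinAt ?_
    refine DifferentiableAt.cpow_const (by fun_prop) ?_
    exact Or.inl (re_one_sub hz)
  have c0 : ∀ n, (f n : ℂ) = cf (fun z => 1 - 2 * Real.pi / UU φ 0 z) n :=
    cf_unique hdF (ball_ev.mono hf)
  have c2 : ∀ n, cf (F2 φ) n = (n + 1) * ((n + 2) * (f (n + 2) : ℂ)) := by
    intro n
    rw [cf_deriv (fun z hz => h.F_deriv2 hz), cf_deriv (fun z hz => h.F_deriv hz), ← c0]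
    push_cast; ring
  set a : ℝ := 1 + 1 / α with ha
  have key := coeff_small (h := fun n => cf (F2 φ) n - DD α cp cm * (bb a n : ℂ))
    (H := fun z => F2 φ z - DD α cp cm * (1 - z) ^ ((-a : ℝ) : ℂ)) (a := a) (by linarith)
    (by
      refine ball_ev.mono fun z hz => ?_
      refine ((cf_hasSum hdF2 hz).sub ((bb_hasSum a hz).mul_left (DD α cp cm))).congr_fun fun n => ?_
      ring)
    (hdF2.sub (hdP.const_mul _)) (h.F2_approx hL)
  have ea : a - 1 = 1 / α := by rw [ha]; ring
  rw [ea] at key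
  have hbb := bb_tendsto (a := a) (by linarith)
  rw [ea] at hbb
  -- ratio limits
  have r1 : Tendsto (fun n : ℕ => (n : ℝ) / (n + 1)) atTop (𝓝 1) := tendsto_natCast_div_add_atTop 1
  have r2 : Tendsto (fun n : ℕ => (n : ℝ) / (n + 2)) atTop (𝓝 1) := tendsto_natCast_div_add_atTop 2
  have r3 : Tendsto (fun n : ℕ => ((n + 1 : ℝ) / n)) atTop (𝓝 1) := by
    have := r1.inv₀ one_ne_zero
    simpa using this
  have r3' : Tendsto (fun n : ℕ => ((n + 1 : ℝ) / n) ^ (1 / α)) atTop (𝓝 1) := by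
    have := r3.rpow_const (p := 1 / α) (Or.inl one_ne_zero)
    simpa using this
  have r2' : Tendsto (fun n : ℕ => ((n : ℝ) / (n + 2)) ^ (1 / α)) atTop (𝓝 1) := by
    have := r2.rpow_const (p := 1 / α) (Or.inl one_ne_zero)
    simpa using this
  have r4 : Tendsto (fun n : ℕ => ((n + 2 : ℝ) / (n + 1))) atTop (𝓝 1) := by
    have := r1.div r2 one_ne_zero
    simp only [div_one] at this
    refine this.congr' ?_
    filter_upwards [eventually_ge_atTop 1] with n hn
    have : (0 : ℝ) < n := by exact_mod_cast hn
    simp only [Pi.div_apply]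
    field_simp
  have key2 : Tendsto (fun n : ℕ => (cf (F2 φ) n - DD α cp cm * (bb a n : ℂ)) / (((n : ℝ) ^ (1 / α) : ℝ) : ℂ))
      atTop (𝓝 0) := by
    rw [tendsto_zero_iff_norm_tendsto_zero]
    have := key.mul r3'
    rw [zero_mul] at this
    refine this.congr' ?_
    filter_upwards [eventually_ge_atTop 1] with n hn
    have hn0 : (0 : ℝ) < n := by exact_mod_cast hn
    rw [norm_div, Complex.norm_real, Real.norm_of_nonneg (by positivity),
      Real.div_rpow (by positivity) hn0.le]
    have : 0 < (n + 1 : ℝ) ^ (1 / α) := by positivity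
    field_simp
  have hbbC : Tendsto (fun n : ℕ => ((bb a n / (n : ℝ) ^ (1 / α) : ℝ) : ℂ)) atTop
      (𝓝 (((Real.Gamma a)⁻¹ : ℝ) : ℂ)) := (Complex.continuous_ofReal.tendsto _).comp hbb
  have key3 := (key2.add (hbbC.const_mul (DD α cp cm))).mul
    ((Complex.continuous_ofReal.tendsto _).comp (r4.mul r2'))
  rw [zero_add, mul_one, Complex.ofReal_one, mul_one] at key3
  rw [← tendsto_add_atTop_iff_nat 2]
  refine key3.congr' ?_
  filter_upwards [eventually_ge_atTop 1] with n hn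
  have hn0 : (0 : ℝ) < n := by exact_mod_cast hn
  simp only [Function.comp_apply]
  rw [c2]
  have e1 : ((n + 2 : ℕ) : ℝ) ^ (-2 + 1 / α) = (n + 2 : ℝ) ^ (1 / α) / (n + 2 : ℝ) ^ 2 := by
    have : (-2 + 1 / α) = 1 / α - (2 : ℕ) := by push_cast; ring
    push_cast
    rw [this, Real.rpow_sub (by positivity), Real.rpow_natCast]
  rw [e1, Real.div_rpow hn0.le (by positivity)]
  have x1 : (((n : ℝ) ^ (1 / α) : ℝ) : ℂ) ≠ 0 := by
    exact_mod_cast (by positivity : (n : ℝ) ^ (1 / α) ≠ 0)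
  have x2 : (((n + 2 : ℝ) ^ (1 / α) : ℝ) : ℂ) ≠ 0 := by
    exact_mod_cast (by positivity : (n + 2 : ℝ) ^ (1 / α) ≠ 0)
  have x3 : (n + 1 : ℂ) ≠ 0 := by exact_mod_cast n.succ_ne_zero
  have x4 : (n + 2 : ℂ) ≠ 0 := by exact_mod_cast (by omega : n + 2 ≠ 0)
  simp only [Complex.ofReal_mul, Complex.ofReal_div, Complex.ofReal_pow, Complex.ofReal_add,
    Complex.ofReal_natCast, Complex.ofReal_one, Complex.ofReal_ofNat]
  generalize (((n : ℝ) ^ (1 / α) : ℝ) : ℂ) = X at *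
  generalize (((n + 2 : ℝ) ^ (1 / α) : ℝ) : ℂ) = Y at *
  field_simp
  ring

end PhiHyp

open PhiHyp in
lemma gen_pn {p : ℤ → ℝ} (hp0 : ∀ x, 0 ≤ p x) (hp1 : HasSum p 1) {z : ℂ} (hz : ‖z‖ < 1) :
    HasSum (fun n => (pn p n 0 : ℂ) * z ^ n) (UU (rwChar p) 0 z / (2 * Real.pi)) := by
  have hpp : (Real.pi : ℂ) ≠ 0 := by exact_mod_cast Real.pi_pos.ne'
  have key := intervalIntegral.hasSum_integral_of_dominated_convergence (μ := volume)
    (a := -Real.pi) (b := Real.pi)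
    (F := fun (n : ℕ) (θ : ℝ) => z ^ n * rwChar p θ ^ n) (f := TT (rwChar p) 0 z)
    (fun n _ => ‖z‖ ^ n) ?_ ?_ ?_ ?_ ?_
  · simp only [intervalIntegral.integral_const_mul, pn_inversion hp0 hp1] at key
    refine (key.div_const (2 * Real.pi : ℂ)).congr_fun fun n => ?_
    field_simp
  · intro n
    have := rwChar_continuous hp0 hp1
    exact (by fun_prop : Continuous fun θ : ℝ => z ^ n * rwChar p θ ^ n).aestronglyMeasurable
  · intro n
    refine ae_of_all _ fun θ _ => ?_
    rw [norm_mul, norm_pow, norm_pow]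
    exact mul_le_of_le_one_right (by positivity)
      (pow_le_one₀ (norm_nonneg _) (rwChar_norm_le hp0 hp1 θ))
  · exact ae_of_all _ fun θ _ => summable_geometric_of_lt_one (norm_nonneg _) hz
  · exact intervalIntegrable_const
  · refine ae_of_all _ fun θ _ => ?_
    simp only [← mul_pow, TT, pow_zero, one_mul, zero_add, pow_one]
    apply hasSum_geometric_of_norm_lt_one
    rw [norm_mul]
    have := rwChar_norm_le hp0 hp1 θ
    nlinarith [norm_nonneg z, norm_nonneg (rwChar p θ)]

open PhiHyp in
lemma gen_first {p : ℤ → ℝ} (hp0 : ∀ x, 0 ≤ p x) (hp1 : HasSum p 1) {z : ℂ} (hz : ‖z‖ < 1)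
    (hU : UU (rwChar p) 0 z ≠ 0) :
    HasSum (fun n => (firstReturn p n : ℂ) * z ^ n) (1 - 2 * Real.pi / UU (rwChar p) 0 z) := by
  have hpp : (Real.pi : ℂ) ≠ 0 := by exact_mod_cast Real.pi_pos.ne'
  have hg := gen_pn hp0 hp1 hz
  have hgeo := summable_geometric_of_lt_one (norm_nonneg _) hz
  have hfs : Summable (fun n => ‖(firstReturn p n : ℂ) * z ^ n‖) := by
    refine Summable.of_nonneg_of_le (fun _ => norm_nonneg _) (fun n => ?_) hgeo
    rw [norm_mul, norm_pow, Complex.norm_real, Real.norm_of_nonneg (firstReturn_nonneg hp0 hp1 n)]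
    exact mul_le_of_le_one_left (by positivity) (firstReturn_le_one hp0 hp1 n)
  have hgs : Summable (fun n => ‖(pn p n 0 : ℂ) * z ^ n‖) := by
    refine Summable.of_nonneg_of_le (fun _ => norm_nonneg _) (fun n => ?_) hgeo
    rw [norm_mul, norm_pow, Complex.norm_real, Real.norm_of_nonneg ((pn_basic hp0 hp1 n).1 0)]
    exact mul_le_of_le_one_left (by positivity) (pn_le_one hp0 hp1 n 0)
  have hprod := tsum_mul_tsum_eq_tsum_sum_antidiagonal_of_summable_norm hfs hgs
  have hps := (summable_norm_sum_mul_antidiagonal_of_summable_norm hfs hgs).of_norm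
  have hconv : ∀ n, (pn p n 0 : ℂ) * z ^ n = (if n = 0 then 1 else 0) +
      ∑ kl ∈ Finset.HasAntidiagonal.antidiagonal n,
        ((firstReturn p kl.1 : ℂ) * z ^ kl.1) * ((pn p kl.2 0 : ℂ) * z ^ kl.2) := by
    intro n
    have e : ∑ kl ∈ Finset.HasAntidiagonal.antidiagonal n,
        ((firstReturn p kl.1 : ℂ) * z ^ kl.1) * ((pn p kl.2 0 : ℂ) * z ^ kl.2) =
        (∑ kl ∈ Finset.HasAntidiagonal.antidiagonal n, (firstReturn p kl.1 : ℂ) * (pn p kl.2 0 : ℂ)) * z ^ n := by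
      rw [Finset.sum_mul]
      refine Finset.sum_congr rfl fun kl hkl => ?_
      rw [← Finset.HasAntidiagonal.mem_antidiagonal.1 hkl, pow_add]; ring
    rw [e]
    have := congrArg (fun x : ℝ => (x : ℂ) * z ^ n) (renewal hp0 hp1 n)
    rw [this]
    by_cases h0 : n = 0
    · subst h0; simp
    · simp [h0]
  have h1 : HasSum (fun n : ℕ => (if n = 0 then (1 : ℂ) else 0)) 1 := by
    simpa using hasSum_ite_eq (0 : ℕ) (1 : ℂ)
  have h2 := (h1.add hps.hasSum)
  simp only [← hconv] at h2
  have h3 := h2.unique hg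
  rw [← hprod, hg.tsum_eq] at h3
  have hfe : (∑' n, (firstReturn p n : ℂ) * z ^ n) = 1 - 2 * Real.pi / UU (rwChar p) 0 z := by
    field_simp at h3 ⊢
    linear_combination h3
  rw [← hfe]
  exact hfs.of_norm.hasSum


/-- the complex power of the two constants -/
lemma const_cpow {α c₀ t : ℝ} (hc : 0 < c₀) (ht : |t| < Real.pi) :
    ((c₀ : ℂ) * Complex.exp (t * Complex.I)) ^ ((-(1 / α) : ℝ) : ℂ) =
      ((c₀ ^ (-(1 / α)) : ℝ) : ℂ) * Complex.exp ((-(t / α) : ℝ) * Complex.I) := by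
  have hm : t ∈ Set.Ioc (-Real.pi) Real.pi := ⟨(abs_lt.1 ht).1, (abs_lt.1 ht).2.le⟩
  have hc' : (c₀ : ℂ) ≠ 0 := by exact_mod_cast hc.ne'
  rw [Complex.cpow_def_of_ne_zero (mul_ne_zero hc' (Complex.exp_ne_zero _)),
    Complex.log_ofReal_mul hc (Complex.exp_ne_zero _),
    Complex.log_exp (by simpa using hm.1) (by simpa using hm.2),
    Real.rpow_def_of_pos hc, Complex.ofReal_exp, ← Complex.exp_add]
  congr 1
  push_cast
  ring

lemma const_LL {α γ c₀ : ℝ} (hα : 1 < α) (hα2 : α < 2) (hγ : |γ| ≤ 2 - α) (hc : 0 < c₀) :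
    PhiHyp.LL α ((c₀ : ℂ) * Complex.exp (Complex.I * Real.pi * γ / 2))
      ((c₀ : ℂ) * Complex.exp (-(Complex.I * Real.pi * γ / 2))) =
    ((Real.Gamma (1 / α + 1) * Real.Gamma (1 - 1 / α) *
      (c₀ ^ (-(1 / α)) * (2 * Real.cos (Real.pi * γ / (2 * α)))) : ℝ) : ℂ) := by
  have hpp := Real.pi_pos
  have hg : |Real.pi * γ / 2| < Real.pi := by
    rw [abs_div, abs_mul, abs_of_pos hpp, abs_two]; nlinarith
  have e1 : Complex.I * Real.pi * γ / 2 = ((Real.pi * γ / 2 : ℝ) : ℂ) * Complex.I := by push_cast; ring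
  have e2 : -(((Real.pi * γ / 2 : ℝ) : ℂ) * Complex.I) = ((-(Real.pi * γ / 2) : ℝ) : ℂ) * Complex.I := by
    push_cast; ring
  unfold PhiHyp.LL
  rw [e1, e2, const_cpow hc hg, const_cpow hc (by rwa [abs_neg]), mI_one hα, ← mul_add]
  have e3 : Complex.exp ((-(Real.pi * γ / 2 / α) : ℝ) * Complex.I) +
      Complex.exp ((-(-(Real.pi * γ / 2) / α) : ℝ) * Complex.I) =
      ((2 * Real.cos (Real.pi * γ / (2 * α)) : ℝ) : ℂ) := by
    have e4 : Real.pi * γ / (2 * α) = Real.pi * γ / 2 / α := by field_simp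
    rw [e4]
    push_cast
    rw [Complex.cos]
    have : ∀ x : ℂ, 2 * ((Complex.exp (x * Complex.I) + Complex.exp (-x * Complex.I)) / 2) =
      Complex.exp (-x * Complex.I) + Complex.exp (x * Complex.I) := fun x => by ring
    rw [this]
    congr 3
    ring
  rw [e3]
  push_cast
  ring

lemma cos_pos_aux {α γ : ℝ} (hα : 1 < α) (hα2 : α < 2) (hγ : |γ| ≤ 2 - α) :
    0 < Real.cos (Real.pi * γ / 2) ∧ 0 < Real.cos (Real.pi * γ / (2 * α)) := by
  have hpp := Real.pi_pos
  have hγ' := abs_le.1 hγ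
  constructor
  · apply Real.cos_pos_of_mem_Ioo
    constructor <;> nlinarith
  · have e4 : Real.pi * γ / (2 * α) = Real.pi * (γ / α) / 2 := by field_simp
    have h1 : |γ / α| < 1 := by
      rw [abs_div, abs_of_pos (by linarith : 0 < α), div_lt_one (by linarith)]; linarith
    rw [abs_lt] at h1
    rw [e4]
    apply Real.cos_pos_of_mem_Ioo
    constructor <;> nlinarith

lemma mkPhi {p : ℤ → ℝ} {α γ c₀ : ℝ}
    (hα : 1 < α) (hα2 : α < 2) (hγ : |γ| ≤ 2 - α) (hc₀ : 0 < c₀)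
    (hp0 : ∀ x, 0 ≤ p x) (hp1 : HasSum p 1)
    (hap : ∀ x : ℤ, ∀ᶠ n in atTop, 0 < pn p n x)
    (hpos : Tendsto (fun θ : ℝ => (1 - rwChar p θ) / ((|θ| ^ α : ℝ) : ℂ)) (𝓝[>] 0)
      (𝓝 ((c₀ : ℂ) * Complex.exp (Complex.I * Real.pi * γ / 2))))
    (hneg : Tendsto (fun θ : ℝ => (1 - rwChar p θ) / ((|θ| ^ α : ℝ) : ℂ)) (𝓝[<] 0)
      (𝓝 ((c₀ : ℂ) * Complex.exp (-(Complex.I * Real.pi * γ / 2))))) :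
    PhiHyp (rwChar p) α (min c₀ (Real.cos (Real.pi * γ / 2)))
      ((c₀ : ℂ) * Complex.exp (Complex.I * Real.pi * γ / 2))
      ((c₀ : ℂ) * Complex.exp (-(Complex.I * Real.pi * γ / 2))) := by
  have hcos := (cos_pos_aux hα hα2 hγ).1
  have e1 : Complex.I * Real.pi * γ / 2 = ((Real.pi * γ / 2 : ℝ) : ℂ) * Complex.I := by push_cast; ring
  have e2 : -(((Real.pi * γ / 2 : ℝ) : ℂ) * Complex.I) = ((-(Real.pi * γ / 2) : ℝ) : ℂ) * Complex.I := by
    push_cast; ring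
  have hn : ∀ t : ℝ, ‖(c₀ : ℂ) * Complex.exp ((t : ℂ) * Complex.I)‖ = c₀ := by
    intro t
    rw [norm_mul, Complex.norm_exp_ofReal_mul_I, Complex.norm_real, Real.norm_of_nonneg hc₀.le, mul_one]
  have hre : ∀ t : ℝ, ((c₀ : ℂ) * Complex.exp ((t : ℂ) * Complex.I)).re = c₀ * Real.cos t := by
    intro t
    rw [Complex.re_ofReal_mul, Complex.exp_ofReal_mul_I_re]
  constructor
  · exact hα
  · exact lt_min hc₀ hcos
  · exact rwChar_continuous hp0 hp1
  · unfold rwChar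
    simp only [Complex.ofReal_zero, mul_zero, zero_mul, Complex.exp_zero, mul_one]
    rw [← Complex.ofReal_tsum, hp1.tsum_eq, Complex.ofReal_one]
  · exact rwChar_norm_le hp0 hp1
  · exact fun θ h0 hθ => rwChar_norm_lt hp0 hp1 hap h0 hθ
  · rw [e1, hn]; exact min_le_left _ _
  · rw [e1, e2, hn]; exact min_le_left _ _
  · rw [e1, hn, hre, mul_comm]
    exact mul_le_mul_of_nonneg_left (min_le_right _ _) hc₀.le
  · rw [e1, e2, hn, hre, Real.cos_neg, mul_comm]
    exact mul_le_mul_of_nonneg_left (min_le_right _ _) hc₀.le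
  · exact hpos
  · exact hneg

theorem stmt19 (p : ℤ → ℝ) (α γ c₀ : ℝ)
    (hα : 1 < α) (hα2 : α < 2) (hγ : |γ| ≤ 2 - α) (hc₀ : 0 < c₀)
    (hp0 : ∀ x, 0 ≤ p x) (hp1 : HasSum p 1)
    (hrec : ¬ Summable (fun n => pn p n 0))
    (hap : ∀ x : ℤ, ∀ᶠ n in atTop, 0 < pn p n x)
    (hpos : Tendsto (fun θ : ℝ => (1 - rwChar p θ) / ((|θ| ^ α : ℝ) : ℂ)) (𝓝[>] 0)
      (𝓝 ((c₀ : ℂ) * Complex.exp (Complex.I * Real.pi * γ / 2))))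
    (hneg : Tendsto (fun θ : ℝ => (1 - rwChar p θ) / ((|θ| ^ α : ℝ) : ℂ)) (𝓝[<] 0)
      (𝓝 ((c₀ : ℂ) * Complex.exp (-(Complex.I * Real.pi * γ / 2))))) :
    (fun n : ℕ => firstReturn p n) ~[atTop]
      (fun n : ℕ =>
        ((α - 1) * Real.sin (Real.pi / α) /
            (Real.Gamma (1 / α) * Real.sin (Real.pi * (α - γ) / (2 * α)))) *
          c₀ ^ (1 / α) * (n : ℝ) ^ (-2 + 1 / α)) := by
  have hpp := Real.pi_pos
  have hα0 : 0 < α := by linarith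
  have hcos := (cos_pos_aux hα hα2 hγ).2
  have h := mkPhi hα hα2 hγ hc₀ hp0 hp1 hap hpos hneg
  have hLe := const_LL hα hα2 hγ hc₀
  have hinv : 1 / α < 1 := by rw [div_lt_one hα0]; exact hα
  have hinv0 : 0 < 1 / α := by positivity
  have hG1 : 0 < Real.Gamma (1 / α) := Real.Gamma_pos_of_pos hinv0
  have hG2 : 0 < Real.Gamma (1 - 1 / α) := Real.Gamma_pos_of_pos (by linarith)
  have hG3 : 0 < Real.Gamma (1 / α + 1) := Real.Gamma_pos_of_pos (by linarith)
  have hcp : 0 < c₀ ^ (-(1 / α)) := by positivity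
  have hL : PhiHyp.LL α ((c₀ : ℂ) * Complex.exp (Complex.I * Real.pi * γ / 2))
      ((c₀ : ℂ) * Complex.exp (-(Complex.I * Real.pi * γ / 2))) ≠ 0 := by
    rw [hLe]
    exact_mod_cast (by positivity : Real.Gamma (1 / α + 1) * Real.Gamma (1 - 1 / α) *
      (c₀ ^ (-(1 / α)) * (2 * Real.cos (Real.pi * γ / (2 * α)))) ≠ 0)
  have key := h.coeff_asymp hL (fun z hz => gen_first hp0 hp1 hz (h.UU_ne hz))
  set κ : ℝ := ((α - 1) * Real.sin (Real.pi / α) /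
            (Real.Gamma (1 / α) * Real.sin (Real.pi * (α - γ) / (2 * α)))) * c₀ ^ (1 / α) with hκ
  have hsinα : 0 < Real.sin (Real.pi / α) := by
    apply Real.sin_pos_of_pos_of_lt_pi (by positivity)
    rw [div_lt_iff₀ hα0]; nlinarith
  have hsin : Real.sin (Real.pi * (α - γ) / (2 * α)) = Real.cos (Real.pi * γ / (2 * α)) := by
    rw [← Real.sin_pi_div_two_sub]; congr 1; field_simp
  have hκ0 : 0 < κ := by
    rw [hκ, hsin]
    have : 0 < α - 1 := by linarith
    positivity
  have hval : PhiHyp.DD α ((c₀ : ℂ) * Complex.exp (Complex.I * Real.pi * γ / 2))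
      ((c₀ : ℂ) * Complex.exp (-(Complex.I * Real.pi * γ / 2))) *
      (((Real.Gamma (1 + 1 / α))⁻¹ : ℝ) : ℂ) = (κ : ℂ) := by
    have href := Real.Gamma_mul_Gamma_one_sub (1 / α)
    have hrec' := Real.Gamma_add_one hinv0.ne'
    have e5 : Real.pi * (1 / α) = Real.pi / α := by ring
    rw [e5] at href
    have hc2 : c₀ ^ (-(1 / α)) = (c₀ ^ (1 / α))⁻¹ := Real.rpow_neg hc₀.le _
    have hcq : 0 < c₀ ^ (1 / α) := by positivity
    unfold PhiHyp.DD
    rw [hLe]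
    have : 2 * Real.pi * ((1 - 1 / α) * (1 / α)) / (Real.Gamma (1 / α + 1) * Real.Gamma (1 - 1 / α) *
      (c₀ ^ (-(1 / α)) * (2 * Real.cos (Real.pi * γ / (2 * α))))) * (Real.Gamma (1 + 1 / α))⁻¹ = κ := by
      rw [hκ, hsin, add_comm 1 (1 / α), hrec', hc2]
      have hG2' : Real.Gamma (1 - 1 / α) = Real.pi / Real.sin (Real.pi / α) / Real.Gamma (1 / α) := by
        rw [eq_div_iff hG1.ne', mul_comm]; exact href
      rw [hG2']
      generalize Real.Gamma (1 / α) = G at *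
      generalize c₀ ^ (1 / α) = c at *
      generalize Real.cos (Real.pi * γ / (2 * α)) = C at *
      generalize Real.sin (Real.pi / α) = S at *
      field_simp
    rw [← this]
    push_cast
    ring
  rw [hval] at key
  have keyR : Tendsto (fun n : ℕ => firstReturn p n / (n : ℝ) ^ (-2 + 1 / α)) atTop (𝓝 κ) := by
    have := (Complex.continuous_re.tendsto _).comp key
    simp only [Complex.ofReal_re] at this
    refine this.congr fun n => ?_
    simp only [Function.comp_apply]
    rw [← Complex.ofReal_div, Complex.ofReal_re]
  have hev : ∀ᶠ n : ℕ in atTop, κ * (n : ℝ) ^ (-2 + 1 / α) ≠ 0 := by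
    filter_upwards [eventually_ge_atTop 1] with n hn
    have : (0 : ℝ) < n := by exact_mod_cast hn
    positivity
  rw [isEquivalent_iff_tendsto_one hev]
  have := keyR.div_const κ
  rw [div_self hκ0.ne'] at this
  refine this.congr fun n => ?_
  simp only [Pi.div_apply]
  rw [div_div, mul_comm κ]
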